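/- arXiv:0910.1207 — 13 statements merged into one kernel-verified Lean document; each statement's English description precedes it below -/
import Mathlib

section
/- Let (X,μ) be a measure space and let f be a μ-measurable function whose distribution function d_{f,μ} is not identically infinite, and whose decreasing rearrangement f* is finite for all t > 0 with sup_{t>0}(f**(t) − f*(t)) ≤ M for some constant M ≥ 0. Then there exists a constant α ≥ 0 (one can take α = lim_{t→∞} f*(t)) such that for all λ > α one has d_{f,μ}(λ) < ∞ and ∫_{{x ∈ X : |f(x)| > λ}} |f| dμ ≤ (λ + M) · d_{f,μ}(λ). -/
open MeasureTheory Set ENNReal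

/-- The distribution function `d_{f,μ}(λ) = μ {x : λ < |f x|}`. -/
noncomputable def distrib {X : Type*} [MeasurableSpace X] (μ : Measure X) (f : X → ℝ)
    (l : ℝ) : ℝ≥0∞ :=
  μ {x | l < |f x|}

/-- The decreasing rearrangement `f*(t) = inf {λ : d_{f,μ}(λ) ≤ t}` (with `inf ∅ = ∞`). -/
noncomputable def rearr {X : Type*} [MeasurableSpace X] (μ : Measure X) (f : X → ℝ)
    (t : ℝ) : ℝ≥0∞ :=
  sInf {l : ℝ≥0∞ | μ {x | l < ENNReal.ofReal |f x|} ≤ ENNReal.ofReal t}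

/-- The maximal function `f**(t) = (1/t) ∫₀ᵗ f*(s) ds`. -/
noncomputable def maxfn {X : Type*} [MeasurableSpace X] (μ : Measure X) (f : X → ℝ)
    (t : ℝ) : ℝ≥0∞ :=
  (∫⁻ s in Set.Ioc (0 : ℝ) t, rearr μ f s) / ENNReal.ofReal t

/-- `∫_{|f|>l} |f| dμ ≤ ∫₀^{d(l)} f*(s) ds`, by the layer cake formula. -/
lemma setLIntegral_le_rearr {X : Type*} [MeasurableSpace X] (μ : Measure X) (f : X → ℝ)
    (hf : Measurable f) (hfin : ∀ t : ℝ, 0 < t → rearr μ f t ≠ ⊤) (A : Set X)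
    (hA : MeasurableSet A) (t : ℝ) (hAt : μ A = ENNReal.ofReal t) :
    ∫⁻ x in A, ENNReal.ofReal |f x| ∂μ ≤ ∫⁻ s in Set.Ioc (0 : ℝ) t, rearr μ f s := by
  have hanti : Antitone (rearr μ f) := by
    intro a b hab
    exact sInf_le_sInf fun l hl => le_trans hl (ENNReal.ofReal_le_ofReal hab)
  have hmeas : Measurable fun s => (rearr μ f s).toReal := hanti.measurable.ennreal_toReal
  have h1 : ∫⁻ s in Set.Ioc (0 : ℝ) t, rearr μ f s
      = ∫⁻ s in Set.Ioc (0 : ℝ) t, ENNReal.ofReal (rearr μ f s).toReal := by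
    refine setLIntegral_congr_fun measurableSet_Ioc fun s hs => ?_
    exact (ENNReal.ofReal_toReal (hfin s hs.1)).symm
  rw [h1, lintegral_eq_lintegral_meas_le _ (Filter.Eventually.of_forall fun s => toReal_nonneg)
      hmeas.aemeasurable,
    lintegral_eq_lintegral_meas_lt _ (Filter.Eventually.of_forall fun x => abs_nonneg (f x))
      hf.abs.aemeasurable]
  refine setLIntegral_mono' measurableSet_Ioi fun r hr => ?_
  have hr0 : 0 < r := hr
  rw [Measure.restrict_apply (measurableSet_lt measurable_const hf.abs),
    Measure.restrict_apply (measurableSet_le measurable_const hmeas)]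
  set m := μ ({a | r < |f a|} ∩ A) with hm
  have hmt : m ≤ ENNReal.ofReal t := hAt ▸ measure_mono Set.inter_subset_right
  have hmtop : m ≠ ⊤ := ne_top_of_le_ne_top ENNReal.ofReal_ne_top hmt
  have hsub : Set.Ioo (0 : ℝ) m.toReal ⊆
      {s | r ≤ (rearr μ f s).toReal} ∩ Set.Ioc (0 : ℝ) t := by
    intro s hs
    have hsm : ENNReal.ofReal s < m := (ENNReal.ofReal_lt_iff_lt_toReal hs.1.le hmtop).2 hs.2
    refine ⟨?_, hs.1, ?_⟩
    · rw [Set.mem_setOf_eq, ← ENNReal.ofReal_le_iff_le_toReal (hfin s hs.1)]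
      refine le_sInf fun l hl => ?_
      by_contra hlt
      rw [not_le] at hlt
      refine absurd (lt_of_lt_of_le hsm (le_trans (measure_mono ?_) hl)) (lt_irrefl _)
      intro x hx
      exact hlt.trans_le (ENNReal.ofReal_le_ofReal (le_of_lt hx.1))
    · have := hsm.trans_le hmt
      exact (ENNReal.ofReal_lt_ofReal_iff_of_nonneg hs.1.le).1 this |>.le
  calc m = volume (Set.Ioo (0 : ℝ) m.toReal) := by
        rw [Real.volume_Ioo, sub_zero, ENNReal.ofReal_toReal hmtop]
    _ ≤ _ := measure_mono hsub

/-- if `f* < ∞` everywhere and `f** - f* ≤ M`, then there is `α ≥ 0`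
(one can take `α = lim_{t→∞} f*(t)`) such that for all `λ > α` the distribution function
is finite and `∫_{|f|>λ} |f| dμ ≤ (λ + M) d_{f,μ}(λ)`. -/
theorem stmt0 {X : Type*} [MeasurableSpace X] (μ : Measure X) (f : X → ℝ)
    (hf : Measurable f)
    (hnotinf : ∃ l : ℝ, 0 ≤ l ∧ distrib μ f l ≠ ⊤)
    (M : ℝ) (hM : 0 ≤ M)
    (hfin : ∀ t : ℝ, 0 < t → rearr μ f t ≠ ⊤)
    (hsub : ∀ t : ℝ, 0 < t → maxfn μ f t - rearr μ f t ≤ ENNReal.ofReal M) :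
    ∃ α : ℝ, 0 ≤ α ∧ ∀ l : ℝ, α < l →
      distrib μ f l < ⊤ ∧
      ∫⁻ x in {x | l < |f x|}, ENNReal.ofReal |f x| ∂μ ≤
        ENNReal.ofReal (l + M) * distrib μ f l := by
  obtain ⟨a, ha0, ha⟩ := hnotinf
  refine ⟨a, ha0, fun l hl => ?_⟩
  have hl0 : 0 ≤ l := ha0.trans hl.le
  have hd : distrib μ f l < ⊤ :=
    lt_of_le_of_lt (measure_mono fun x hx => lt_trans hl hx) (lt_top_iff_ne_top.2 ha)
  refine ⟨hd, ?_⟩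
  by_cases h0 : distrib μ f l = 0
  · rw [setLIntegral_measure_zero _ _ h0]
    exact zero_le
  set t := (distrib μ f l).toReal with ht
  have htd : ENNReal.ofReal t = distrib μ f l := ENNReal.ofReal_toReal hd.ne
  have htpos : 0 < t := ENNReal.toReal_pos h0 hd.ne
  have hA : MeasurableSet {x | l < |f x|} := measurableSet_lt measurable_const hf.abs
  have hr : rearr μ f t ≤ ENNReal.ofReal l := by
    refine sInf_le ?_
    rw [Set.mem_setOf_eq, htd]
    exact measure_mono fun x hx => (ENNReal.ofReal_lt_ofReal_iff_of_nonneg hl0).1 hx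
  have hmax : maxfn μ f t ≤ ENNReal.ofReal (l + M) := by
    rw [ENNReal.ofReal_add hl0 hM, add_comm]
    exact (tsub_le_iff_right.1 (hsub t htpos)).trans (by gcongr)
  refine (setLIntegral_le_rearr μ f hf hfin _ hA t htd.symm).trans ?_
  rw [← htd]
  exact (ENNReal.div_le_iff (by simpa using htpos) ENNReal.ofReal_ne_top).1 hmax
end

section
/- Let g : (α, ∞) → [0, ∞) be a decreasing function (α ≥ 0) and let M > 0 be such that ∫_s^∞ g(t) dt ≤ M · g(s) for every s > α. Then g(s + t) ≤ 4 · e^{−(log 2) t / M} · g(s) for every s > α and every t > 0. -/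
open MeasureTheory Set ENNReal

/-- if `g : (α,∞) → [0,∞)` is decreasing and `∫_s^∞ g(t) dt ≤ M g(s)` for all
`s > α`, then `g(s + t) ≤ 4 e^{-(log 2) t / M} g(s)` for all `s > α`, `t > 0`. -/
theorem stmt3 (α : ℝ) (hα : 0 ≤ α) (g : ℝ → ℝ)
    (hg_nonneg : ∀ s : ℝ, α < s → 0 ≤ g s)
    (hg_dec : ∀ s t : ℝ, α < s → s ≤ t → g t ≤ g s)
    (M : ℝ) (hM : 0 < M)
    (hint : ∀ s : ℝ, α < s →
      ∫⁻ t in Set.Ioi s, ENNReal.ofReal (g t) ≤ ENNReal.ofReal (M * g s)) :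
    ∀ s t : ℝ, α < s → 0 < t →
      g (s + t) ≤ 4 * Real.exp (-(Real.log 2) * t / M) * g s := by
  have key : ∀ s : ℝ, α < s → ENNReal.ofReal (M * g (s + M)) +
      ∫⁻ t in Set.Ioi (s + M), ENNReal.ofReal (g t) ≤ ∫⁻ t in Set.Ioi s, ENNReal.ofReal (g t) := by
    intro s hs
    have hU : Set.Ioi s = Set.Ioc s (s + M) ∪ Set.Ioi (s + M) :=
      (Set.Ioc_union_Ioi_eq_Ioi (by linarith)).symm
    rw [hU, lintegral_union measurableSet_Ioi Set.Ioc_disjoint_Ioi_same]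
    gcongr
    calc ENNReal.ofReal (M * g (s + M))
        = ∫⁻ _ in Set.Ioc s (s + M), ENNReal.ofReal (g (s + M)) := by
          rw [setLIntegral_const, Real.volume_Ioc, ENNReal.ofReal_mul hM.le, mul_comm]
          simp
      _ ≤ _ := by
          apply setLIntegral_mono' measurableSet_Ioc
          intro x hx
          exact ENNReal.ofReal_le_ofReal (hg_dec x _ (hs.trans hx.1) hx.2)
  have iter : ∀ n : ℕ, ∀ s : ℝ, α < s →
      2 ^ n * ∫⁻ t in Set.Ioi (s + n * M), ENNReal.ofReal (g t)
        ≤ ∫⁻ t in Set.Ioi s, ENNReal.ofReal (g t) := by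
    intro n
    induction n with
    | zero => intro s hs; simp
    | succ n ih =>
      intro s hs
      have hs' : α < s + M := by linarith
      have h1 := ih (s + M) hs'
      have e : s + ((n + 1 : ℕ) : ℝ) * M = s + M + n * M := by push_cast; ring
      rw [e, pow_succ', mul_assoc]
      refine le_trans ?_ (key s hs)
      rw [two_mul]
      exact add_le_add (h1.trans (hint _ hs')) h1
  have main : ∀ n : ℕ, ∀ s : ℝ, α < s → 2 ^ n * g (s + n * M + M) ≤ g s := by
    intro n s hs
    have hn : 0 ≤ (n : ℝ) * M := by positivity
    have h1 := key (s + n * M) (by linarith)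
    have h2 : 2 ^ n * ENNReal.ofReal (M * g (s + n * M + M)) ≤ ENNReal.ofReal (M * g s) := by
      refine le_trans ?_ ((iter n s hs).trans (hint s hs))
      gcongr
      exact le_self_add.trans h1
    have e : (2 : ℝ≥0∞) ^ n = ENNReal.ofReal (2 ^ n) := by
      rw [ENNReal.ofReal_pow (by norm_num)]; simp
    rw [e, ← ENNReal.ofReal_mul (by positivity),
      ENNReal.ofReal_le_ofReal_iff (mul_nonneg hM.le (hg_nonneg s hs))] at h2
    refine le_of_mul_le_mul_left ?_ hM
    linarith
  intro s t hs ht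
  have hgs := hg_nonneg s hs
  have hexp : Real.exp (-(Real.log 2) * t / M) = (2 : ℝ) ^ (-(t / M)) := by
    rw [Real.rpow_def_of_pos (by norm_num)]; congr 1; ring
  rw [hexp]
  have lb : ∀ n : ℕ, t / M ≤ n → ((2 : ℝ) ^ n)⁻¹ ≤ (2 : ℝ) ^ (-(t / M)) := by
    intro n h
    rw [← Real.rpow_natCast, ← Real.rpow_neg (by norm_num)]
    exact Real.rpow_le_rpow_of_exponent_le (by norm_num) (by linarith)
  rcases lt_or_ge t M with h | h
  · have h1 := lb 1 (by rw [div_le_iff₀ hM]; simpa using h.le)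
    have h2 := hg_dec s (s + t) hs (by linarith)
    norm_num at h1
    nlinarith
  · have h0 : 0 ≤ t / M - 1 := by rw [sub_nonneg, le_div_iff₀ hM]; linarith
    have hf := Nat.floor_le h0
    have hf' := Nat.lt_floor_add_one (t / M - 1)
    set n := ⌊t / M - 1⌋₊
    have h1 := lb (n + 2) (by push_cast; linarith)
    have h2 : s + n * M + M ≤ s + t := by
      have : ((n : ℝ) + 1) * M ≤ t := by rw [← le_div_iff₀ hM]; linarith
      linarith
    have hn : 0 ≤ (n : ℝ) * M := by positivity
    have h3 := hg_dec _ (s + t) (by linarith) h2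
    have h4 := main n s hs
    have hp : (0 : ℝ) < 2 ^ n := by positivity
    calc g (s + t) ≤ g (s + n * M + M) := h3
      _ ≤ (2 ^ n)⁻¹ * g s := by
        rw [inv_mul_eq_div, le_div_iff₀ hp]; linarith
      _ = 4 * (2 ^ (n + 2))⁻¹ * g s := by rw [pow_add]; field_simp; norm_num
      _ ≤ _ := by gcongr
end

section
/- Let (X,μ) be a measure space and let f be a μ-measurable function. Suppose there exist constants α ≥ 0 and M ≥ 0 such that for all λ > α one has d_{f,μ}(λ) < ∞ and ∫_λ^∞ d_{f,μ}(s) ds ≤ M · d_{f,μ}(λ). Then there exist constants c₁, c₂ > 0 (one may take c₁ = 4 and c₂ = (log 2)/M) such that d_{f,μ}(λ₂) ≤ c₁ · d_{f,μ}(λ₁) · e^{c₂(λ₁ − λ₂)} for all λ₂ > λ₁ > α. -/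
open MeasureTheory Set ENNReal

/-- if for some `α, M ≥ 0` and all `λ > α` one has `d_{f,μ}(λ) < ∞` and
`∫_λ^∞ d_{f,μ}(s) ds ≤ M d_{f,μ}(λ)`, then there are `c₁, c₂ > 0` with
`d_{f,μ}(λ₂) ≤ c₁ d_{f,μ}(λ₁) e^{c₂ (λ₁ - λ₂)}` for all `λ₂ > λ₁ > α`. -/
theorem stmt4 {X : Type*} [MeasurableSpace X] (μ : Measure X) (f : X → ℝ)
    (hf : Measurable f)
    (α M : ℝ) (hα : 0 ≤ α) (hM : 0 ≤ M)
    (h : ∀ l : ℝ, α < l →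
      distrib μ f l < ⊤ ∧
      (∫⁻ s in Set.Ioi l, distrib μ f s) ≤ ENNReal.ofReal M * distrib μ f l) :
    ∃ c₁ c₂ : ℝ, 0 < c₁ ∧ 0 < c₂ ∧
      ∀ l₁ l₂ : ℝ, α < l₁ → l₁ < l₂ →
        distrib μ f l₂ ≤
          ENNReal.ofReal (c₁ * Real.exp (c₂ * (l₁ - l₂))) * distrib μ f l₁ := by
  have anti : Antitone (distrib μ f) := by
    intro a b hab
    exact measure_mono (fun x (hx : b < |f x|) => lt_of_le_of_lt hab hx)
  obtain ⟨L, hLdef⟩ : ∃ L : ℝ, L = Real.exp 1 * (M + 1) := ⟨_, rfl⟩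
  have he : 0 < Real.exp 1 := Real.exp_pos 1
  have hL : 0 < L := by rw [hLdef]; positivity
  have hML : L⁻¹ * M ≤ Real.exp (-1) := by
    rw [Real.exp_neg, hLdef, mul_inv, mul_assoc]
    have : (M + 1)⁻¹ * M ≤ 1 := by
      rw [inv_mul_le_iff₀ (by linarith)]
      linarith
    exact mul_le_of_le_one_right (by positivity) this
  have step : ∀ l, α < l → distrib μ f (l + L) ≤ ENNReal.ofReal (Real.exp (-1)) * distrib μ f l := by
    intro l hl
    have h1 : ENNReal.ofReal L * distrib μ f (l + L) ≤ ENNReal.ofReal M * distrib μ f l := by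
      refine le_trans ?_ (h l hl).2
      calc ENNReal.ofReal L * distrib μ f (l + L)
          = ∫⁻ s in Set.Ioc l (l + L), distrib μ f (l + L) := by
            rw [setLIntegral_const, Real.volume_Ioc, mul_comm]
            congr 2
            ring
        _ ≤ ∫⁻ s in Set.Ioc l (l + L), distrib μ f s :=
            setLIntegral_mono' measurableSet_Ioc (fun s hs => anti hs.2)
        _ ≤ ∫⁻ s in Set.Ioi l, distrib μ f s := lintegral_mono_set (fun s hs => hs.1)
    calc distrib μ f (l + L)
        = ENNReal.ofReal L⁻¹ * (ENNReal.ofReal L * distrib μ f (l + L)) := by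
          rw [← mul_assoc, ← ENNReal.ofReal_mul (by positivity), inv_mul_cancel₀ hL.ne',
            ENNReal.ofReal_one, one_mul]
      _ ≤ ENNReal.ofReal L⁻¹ * (ENNReal.ofReal M * distrib μ f l) := by gcongr
      _ = ENNReal.ofReal (L⁻¹ * M) * distrib μ f l := by
          rw [← mul_assoc, ← ENNReal.ofReal_mul (by positivity)]
      _ ≤ _ := by gcongr
  have iter : ∀ n : ℕ, ∀ l, α < l →
      distrib μ f (l + n * L) ≤ ENNReal.ofReal (Real.exp (-n)) * distrib μ f l := by
    intro n l hl
    induction n with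
    | zero => simp
    | succ k ih =>
      have hk : α < l + k * L := by
        have : 0 ≤ (k : ℝ) * L := by positivity
        linarith
      calc distrib μ f (l + (k + 1 : ℕ) * L) = distrib μ f (l + k * L + L) := by
            congr 1
            push_cast
            ring
        _ ≤ ENNReal.ofReal (Real.exp (-1)) * distrib μ f (l + k * L) := step _ hk
        _ ≤ ENNReal.ofReal (Real.exp (-1)) * (ENNReal.ofReal (Real.exp (-k)) * distrib μ f l) := by
            gcongr
        _ = _ := by
            rw [← mul_assoc, ← ENNReal.ofReal_mul (by positivity), ← Real.exp_add]
            congr 3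
            push_cast
            ring
  refine ⟨Real.exp 1, L⁻¹, he, by positivity, fun l₁ l₂ h1 h2 => ?_⟩
  have hx : 0 ≤ (l₂ - l₁) / L := div_nonneg (by linarith) hL.le
  have hn1 := Nat.floor_le hx
  have hn2 := Nat.lt_floor_add_one ((l₂ - l₁) / L)
  rw [le_div_iff₀ hL] at hn1
  refine (anti (by linarith)).trans ((iter ⌊(l₂ - l₁) / L⌋₊ l₁ h1).trans ?_)
  rw [← Real.exp_add]
  gcongr
  have : L⁻¹ * (l₁ - l₂) = - ((l₂ - l₁) / L) := by
    rw [div_eq_mul_inv]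
    ring
  linarith
end

section
/- Let (X,μ) be a measure space and let f be a μ-measurable function. Suppose there exist constants c₁, c₂ > 0 such that d_{f,μ}(λ₂) ≤ c₁ · d_{f,μ}(λ₁) · e^{c₂(λ₁ − λ₂)} for all λ₂ > λ₁ ≥ 0 and that d_{f,μ} is not identically infinite. Then there exists α ≥ 0 such that for all λ > α one has d_{f,μ}(λ) < ∞ and ∫_{{x ∈ X : |f(x)| > λ}} |f| dμ ≤ (λ + c₁/c₂) · d_{f,μ}(λ). -/
open MeasureTheory Set ENNReal

/-- if `d_{f,μ}(λ₂) ≤ c₁ d_{f,μ}(λ₁) e^{c₂ (λ₁ - λ₂)}` for all `λ₂ > λ₁ ≥ 0`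
and `d_{f,μ}` is not identically infinite, then there is `α ≥ 0` so that for all `λ > α`
the distribution function is finite and
`∫_{|f|>λ} |f| dμ ≤ (λ + c₁/c₂) d_{f,μ}(λ)`. -/
theorem stmt5 {X : Type*} [MeasurableSpace X] (μ : Measure X) (f : X → ℝ)
    (hf : Measurable f)
    (c₁ c₂ : ℝ) (hc₁ : 0 < c₁) (hc₂ : 0 < c₂)
    (h : ∀ l₁ l₂ : ℝ, 0 ≤ l₁ → l₁ < l₂ →
      distrib μ f l₂ ≤ ENNReal.ofReal (c₁ * Real.exp (c₂ * (l₁ - l₂))) * distrib μ f l₁)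
    (hnotinf : ∃ l : ℝ, 0 ≤ l ∧ distrib μ f l ≠ ⊤) :
    ∃ α : ℝ, 0 ≤ α ∧ ∀ l : ℝ, α < l →
      distrib μ f l < ⊤ ∧
      ∫⁻ x in {x | l < |f x|}, ENNReal.ofReal |f x| ∂μ ≤
        ENNReal.ofReal (l + c₁ / c₂) * distrib μ f l := by
  obtain ⟨a, ha, hfin⟩ := hnotinf
  refine ⟨a, ha, fun l hl => ⟨?_, ?_⟩⟩
  · exact lt_of_le_of_lt (h a l ha hl)
      (ENNReal.mul_lt_top ENNReal.ofReal_lt_top (lt_top_iff_ne_top.2 hfin))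
  have hl0 : 0 < l := lt_of_le_of_lt ha hl
  have hS : MeasurableSet {x | l < |f x|} := measurableSet_lt measurable_const hf.abs
  have hg : Measurable (fun x => max (|f x| - l) 0) :=
    (hf.abs.sub_const l).max measurable_const
  have key : ∫⁻ x, ENNReal.ofReal (max (|f x| - l) 0) ∂μ ≤
      ENNReal.ofReal (c₁ / c₂) * distrib μ f l := by
    rw [lintegral_eq_lintegral_meas_lt (f := fun x => max (|f x| - l) 0) μ (Filter.Eventually.of_forall fun x => le_max_right _ _)
      hg.aemeasurable]
    have hneg : -c₂ < 0 := by linarith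
    have hexp : ∫⁻ t in Ioi (0:ℝ), ENNReal.ofReal (c₁ * Real.exp (-c₂ * t)) =
        ENNReal.ofReal (c₁ / c₂) := by
      rw [← ofReal_integral_eq_lintegral_ofReal ((integrableOn_exp_mul_Ioi hneg 0).const_mul c₁)
        (Filter.Eventually.of_forall fun t => by positivity)]
      rw [integral_const_mul, integral_exp_mul_Ioi hneg 0]
      congr 1
      simp [div_eq_mul_inv]
    rw [← hexp, ← lintegral_mul_const _ (by fun_prop)]
    refine setLIntegral_mono' measurableSet_Ioi fun t ht => ?_
    have ht' : (0:ℝ) < t := ht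
    have h1 := h l (l + t) hl0.le (by linarith)
    have h2 : c₂ * (l - (l + t)) = -c₂ * t := by ring
    rw [h2] at h1
    refine le_trans (measure_mono fun x hx => ?_) h1
    simp only [mem_setOf_eq, lt_max_iff] at hx ⊢
    rcases hx with hx | hx <;> linarith
  calc ∫⁻ x in {x | l < |f x|}, ENNReal.ofReal |f x| ∂μ
      ≤ ∫⁻ x in {x | l < |f x|},
          (ENNReal.ofReal l + ENNReal.ofReal (max (|f x| - l) 0)) ∂μ := by
        refine setLIntegral_mono' hS fun x _ => ?_
        rw [← ENNReal.ofReal_add hl0.le (le_max_right _ _)]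
        apply ENNReal.ofReal_le_ofReal
        linarith [le_max_left (|f x| - l) 0]
    _ = ENNReal.ofReal l * distrib μ f l +
          ∫⁻ x in {x | l < |f x|}, ENNReal.ofReal (max (|f x| - l) 0) ∂μ := by
        rw [lintegral_add_left measurable_const, setLIntegral_const, distrib]
    _ ≤ ENNReal.ofReal l * distrib μ f l + ENNReal.ofReal (c₁ / c₂) * distrib μ f l := by
        gcongr
        exact (setLIntegral_le_lintegral _ _).trans key
    _ = ENNReal.ofReal (l + c₁ / c₂) * distrib μ f l := by
        rw [ENNReal.ofReal_add hl0.le (by positivity), add_mul]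
end

section
/- Let (X,μ) be a measure space, f a μ-measurable function, and t > 0 a point where the decreasing rearrangement f*(t) is finite. Then ∫_0^t f*(s) ds = t · f*(t) + ∫_{f*(t)}^∞ d_{f,μ}(λ) dλ; equivalently, f**(t) − f*(t) = (1/t) ∫_{f*(t)}^∞ d_{f,μ}(λ) dλ. -/
open MeasureTheory Set ENNReal

theorem lt_rearr_iff {X : Type*} [MeasurableSpace X] (μ : Measure X) (f : X → ℝ)
    (s : ℝ) (l : ℝ≥0∞) :
    l < rearr μ f s ↔ ENNReal.ofReal s < μ {x | l < ENNReal.ofReal |f x|} := by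
  constructor
  · intro h
    by_contra! hc
    exact absurd (sInf_le (show l ∈ {l : ℝ≥0∞ | μ {x | l < ENNReal.ofReal |f x|}
      ≤ ENNReal.ofReal s} from hc)) (not_le.mpr h)
  · intro h
    have hl : l < ⊤ := by
      by_contra! hc
      rw [top_le_iff] at hc
      subst hc
      simp at h
    obtain ⟨u, hu, hul, hlim⟩ := exists_seq_strictAnti_tendsto' hl
    have hU : {x | l < ENNReal.ofReal |f x|} = ⋃ n, {x | u n < ENNReal.ofReal |f x|} := by
      ext x
      simp only [mem_setOf_eq, mem_iUnion]
      constructor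
      · intro hx
        exact ((hlim.eventually (gt_mem_nhds hx))).exists
      · rintro ⟨n, hn⟩
        exact (hul n).1.trans hn
    have hm : Monotone fun n => {x | u n < ENNReal.ofReal |f x|} := by
      intro m n hmn x hx
      exact lt_of_le_of_lt (hu.antitone hmn) hx
    rw [hU, hm.measure_iUnion] at h
    obtain ⟨n, hn⟩ := lt_iSup_iff.mp h
    refine lt_of_lt_of_le (hul n).1 (le_sInf ?_)
    intro k hk
    by_contra! hc
    refine absurd (hn.trans_le ((measure_mono ?_).trans hk)) (lt_irrefl _)
    intro x hx
    exact lt_trans hc hx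

theorem rearr_antitone {X : Type*} [MeasurableSpace X] (μ : Measure X) (f : X → ℝ) :
    Antitone (rearr μ f) := by
  intro s t hst
  refine sInf_le_sInf ?_
  intro l hl
  exact le_trans hl (ENNReal.ofReal_le_ofReal hst)

theorem vol_aux (b : ℝ) (hb : 0 ≤ b) (y : ℝ≥0∞) :
    volume {l : ℝ | b < l ∧ ENNReal.ofReal l < y} = y - ENNReal.ofReal b := by
  induction y with
  | top =>
    have : {l : ℝ | b < l ∧ ENNReal.ofReal l < ⊤} = Ioi b := by
      ext l; simp
    rw [this]; simp
  | coe y =>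
    have : {l : ℝ | b < l ∧ ENNReal.ofReal l < y} = Ioo b y := by
      ext l
      simp only [mem_setOf_eq, mem_Ioo, and_congr_right_iff]
      intro h
      rw [← ENNReal.ofReal_coe_nnreal, ENNReal.ofReal_lt_ofReal_iff_of_nonneg (hb.trans h.le)]
    rw [this, Real.volume_Ioo, ENNReal.ofReal_sub _ hb, ENNReal.ofReal_coe_nnreal]

theorem lint_aux {X : Type*} [MeasurableSpace X] (μ : Measure X) (f : X → ℝ)
    (t : ℝ) (b : ℝ) (hb : 0 ≤ b) (h : rearr μ f t = ENNReal.ofReal b) :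
    (∫⁻ s in Set.Ioc (0 : ℝ) t, (rearr μ f s - ENNReal.ofReal b)) =
      ∫⁻ l in Set.Ioi b, distrib μ f l := by
  have hmeas : Measurable (rearr μ f) := (rearr_antitone μ f).measurable
  have hS : MeasurableSet {p : ℝ × ℝ | ENNReal.ofReal p.2 < rearr μ f p.1} :=
    measurableSet_lt (ENNReal.measurable_ofReal.comp measurable_snd) (hmeas.comp measurable_fst)
  have h1 := Measure.prod_apply (μ := volume.restrict (Ioc (0:ℝ) t))
    (ν := volume.restrict (Ioi b)) hS
  have h2 := Measure.prod_apply_symm (μ := volume.restrict (Ioc (0:ℝ) t))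
    (ν := volume.restrict (Ioi b)) hS
  rw [h1] at h2
  have h3 : ∀ s, (volume.restrict (Ioi b))
      (Prod.mk s ⁻¹' {p : ℝ × ℝ | ENNReal.ofReal p.2 < rearr μ f p.1}) =
      rearr μ f s - ENNReal.ofReal b := by
    intro s
    rw [Measure.restrict_apply (measurable_prodMk_left hS), ← vol_aux b hb]
    congr 1
    ext l
    simp [and_comm]
  simp_rw [h3] at h2
  rw [h2]
  refine setLIntegral_congr_fun measurableSet_Ioi ?_
  intro l hl
  have hl : b < l := hl
  have hl0 : 0 ≤ l := hb.trans hl.le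
  have hD : μ {x | ENNReal.ofReal l < ENNReal.ofReal |f x|} = distrib μ f l := by
    unfold distrib
    congr 1
    ext x
    simp only [mem_setOf_eq]
    rw [ENNReal.ofReal_lt_ofReal_iff_of_nonneg hl0]
  have hDt : distrib μ f l ≤ ENNReal.ofReal t := by
    rw [← hD, ← not_lt, ← lt_rearr_iff, h, not_lt]
    exact ENNReal.ofReal_le_ofReal hl.le
  show (volume.restrict (Ioc 0 t))
      ((fun s => (s, l)) ⁻¹' {p : ℝ × ℝ | ENNReal.ofReal p.2 < rearr μ f p.1}) = _
  rw [Measure.restrict_apply (measurable_prodMk_right hS)]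
  have := vol_aux 0 le_rfl (distrib μ f l)
  rw [ENNReal.ofReal_zero, tsub_zero] at this
  rw [← this]
  congr 1
  ext s
  simp only [mem_inter_iff, mem_preimage, mem_setOf_eq, mem_Ioc]
  rw [lt_rearr_iff, hD]
  constructor
  · rintro ⟨h1, h2, h3⟩
    exact ⟨h2, h1⟩
  · rintro ⟨h1, h2⟩
    refine ⟨h2, h1, ?_⟩
    exact ((ENNReal.ofReal_lt_ofReal_iff_of_nonneg h1.le).mp (h2.trans_le hDt)).le

/-- for `t > 0` with `f*(t) < ∞`,
`∫₀ᵗ f*(s) ds = t f*(t) + ∫_{f*(t)}^∞ d_{f,μ}(λ) dλ`; equivalently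
`f**(t) - f*(t) = (1/t) ∫_{f*(t)}^∞ d_{f,μ}(λ) dλ`. -/
theorem stmt6 {X : Type*} [MeasurableSpace X] (μ : Measure X) (f : X → ℝ)
    (hf : Measurable f) (t : ℝ) (ht : 0 < t) (hfin : rearr μ f t ≠ ⊤) :
    ((∫⁻ s in Set.Ioc (0 : ℝ) t, rearr μ f s) =
        ENNReal.ofReal t * rearr μ f t +
          ∫⁻ l in Set.Ioi (rearr μ f t).toReal, distrib μ f l) ∧
    (maxfn μ f t - rearr μ f t =
        (∫⁻ l in Set.Ioi (rearr μ f t).toReal, distrib μ f l) / ENNReal.ofReal t) := by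
  have hb : rearr μ f t = ENNReal.ofReal (rearr μ f t).toReal := (ENNReal.ofReal_toReal hfin).symm
  have key := lint_aux μ f t _ ENNReal.toReal_nonneg hb
  rw [← hb] at key
  have hint : (∫⁻ s in Set.Ioc (0 : ℝ) t, rearr μ f s) =
        ENNReal.ofReal t * rearr μ f t +
          ∫⁻ l in Set.Ioi (rearr μ f t).toReal, distrib μ f l := by
    rw [← key]
    have hc : ENNReal.ofReal t * rearr μ f t = ∫⁻ _ in Set.Ioc (0 : ℝ) t, rearr μ f t := by
      rw [setLIntegral_const, Real.volume_Ioc, sub_zero, mul_comm]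
    rw [hc, ← lintegral_add_left measurable_const]
    refine setLIntegral_congr_fun measurableSet_Ioc ?_
    intro s hs
    exact (add_tsub_cancel_of_le (rearr_antitone μ f hs.2)).symm
  refine ⟨hint, ?_⟩
  have ht0 : ENNReal.ofReal t ≠ 0 := by simpa using ht
  unfold maxfn
  rw [hint, ENNReal.add_div, mul_comm, ENNReal.mul_div_cancel_right ht0 ENNReal.ofReal_ne_top,
    ENNReal.add_sub_cancel_left hfin]
end

section
/- Let (X,μ) be a measure space and let f be a μ-measurable function such that for all λ > 0 with 0 < d_{f,μ}(λ) < ∞ one has ∫_{{x ∈ X : |f(x)| > λ}} |f| dμ ≤ (λ + M) d_{f,μ}(λ) with constant M ≥ 0. Then for every λ with 0 < d_{f,μ}(λ) < ∞ and every γ > 1, μ({x ∈ X : λ < |f(x)| ≤ λ + γM}) / μ({x ∈ X : |f(x)| > λ}) ≥ 1 − 2^{2−γ}. -/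
open MeasureTheory Set ENNReal

noncomputable def excess {X : Type*} [MeasurableSpace X] (μ : Measure X) (f : X → ℝ)
    (l : ℝ) : ℝ≥0∞ := ∫⁻ x, ENNReal.ofReal (|f x| - l) ∂μ

lemma meas_sup {X : Type*} [MeasurableSpace X] (f : X → ℝ) (hf : Measurable f) (l : ℝ) :
    MeasurableSet {x | l < |f x|} := measurableSet_lt measurable_const (by fun_prop)

lemma distrib_anti {X : Type*} [MeasurableSpace X] (μ : Measure X) (f : X → ℝ)
    {a b : ℝ} (hab : a ≤ b) : distrib μ f b ≤ distrib μ f a :=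
  measure_mono fun _ hx => lt_of_le_of_lt hab hx

lemma excess_lower {X : Type*} [MeasurableSpace X] (μ : Measure X) (f : X → ℝ)
    (hf : Measurable f) (l s : ℝ) (hs : 0 ≤ s) :
    excess μ f (l + s) + ENNReal.ofReal s * distrib μ f (l + s) ≤ excess μ f l := by
  unfold excess distrib
  rw [← lintegral_indicator_const (meas_sup f hf (l + s)), ← lintegral_add_left (by fun_prop)]
  apply lintegral_mono
  intro x
  by_cases hx : l + s < |f x|
  · simp only [indicator, mem_setOf_eq, hx, if_true]
    rw [← ENNReal.ofReal_add (by linarith) hs]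
    exact ENNReal.ofReal_le_ofReal (by linarith)
  · simp only [indicator, mem_setOf_eq, hx, if_false, add_zero]
    exact ENNReal.ofReal_le_ofReal (by linarith)

lemma excess_upper {X : Type*} [MeasurableSpace X] (μ : Measure X) (f : X → ℝ)
    (hf : Measurable f) (l s : ℝ) (hs : 0 ≤ s) :
    excess μ f l ≤ excess μ f (l + s) + ENNReal.ofReal s * distrib μ f l := by
  unfold excess distrib
  rw [← lintegral_indicator_const (meas_sup f hf l), ← lintegral_add_left (by fun_prop)]
  apply lintegral_mono
  intro x
  by_cases hx : l < |f x|
  · simp only [indicator, mem_setOf_eq, hx, if_true]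
    refine le_trans (ENNReal.ofReal_le_ofReal ?_) ENNReal.ofReal_add_le
    linarith
  · simp only [indicator, mem_setOf_eq, hx, if_false, add_zero]
    rw [ENNReal.ofReal_of_nonpos (by linarith)]
    exact zero_le

lemma excess_zero {X : Type*} [MeasurableSpace X] (μ : Measure X) (f : X → ℝ)
    (hf : Measurable f) (l : ℝ) : excess μ f l = 0 ↔ distrib μ f l = 0 := by
  unfold excess distrib
  rw [lintegral_eq_zero_iff (by fun_prop), Filter.EventuallyEq, ae_iff]
  simp

lemma setLIntegral_eq {X : Type*} [MeasurableSpace X] (μ : Measure X) (f : X → ℝ)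
    (hf : Measurable f) (l : ℝ) (hl : 0 ≤ l) :
    ∫⁻ x in {x | l < |f x|}, ENNReal.ofReal |f x| ∂μ =
      excess μ f l + ENNReal.ofReal l * distrib μ f l := by
  unfold excess distrib
  rw [← lintegral_indicator_const (meas_sup f hf l), ← lintegral_add_left (by fun_prop),
    ← lintegral_indicator (meas_sup f hf l)]
  congr 1
  ext x
  by_cases hx : l < |f x|
  · simp only [indicator, mem_setOf_eq, hx, if_true]
    rw [← ENNReal.ofReal_add (by linarith) hl]
    congr 1; ring
  · simp only [indicator, mem_setOf_eq, hx, if_false, add_zero]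
    rw [ENNReal.ofReal_of_nonpos (by linarith)]

/-- if `∫_{|f|>λ} |f| dμ ≤ (λ + M) d_{f,μ}(λ)` for all `λ > 0` with
`0 < d_{f,μ}(λ) < ∞`, then for every `λ ≥ 0` with `0 < d_{f,μ}(λ) < ∞` and every `γ > 1`,
`μ({λ < |f| ≤ λ + γM}) / μ({|f| > λ}) ≥ 1 - 2^{2-γ}`. -/
theorem stmt7 {X : Type*} [MeasurableSpace X] (μ : Measure X) (f : X → ℝ)
    (hf : Measurable f) (M : ℝ) (hM : 0 ≤ M)
    (h : ∀ l : ℝ, 0 < l → 0 < distrib μ f l → distrib μ f l < ⊤ →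
      ∫⁻ x in {x | l < |f x|}, ENNReal.ofReal |f x| ∂μ ≤
        ENNReal.ofReal (l + M) * distrib μ f l) :
    ∀ l : ℝ, 0 ≤ l → 0 < distrib μ f l → distrib μ f l < ⊤ →
      ∀ γ : ℝ, 1 < γ →
        ENNReal.ofReal (1 - 2 ^ (2 - γ)) ≤
          μ {x | l < |f x| ∧ |f x| ≤ l + γ * M} / μ {x | l < |f x|} := by
  intro l hl hpos hfin γ hγ
  have hG1 : ∀ a : ℝ, 0 < a → l ≤ a → excess μ f a ≤ ENNReal.ofReal M * distrib μ f a := by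
    intro a ha hla
    rcases eq_or_ne (distrib μ f a) 0 with h0 | h0
    · rw [(excess_zero μ f hf a).2 h0]; exact zero_le
    · have hfa : distrib μ f a < ⊤ := (distrib_anti μ f hla).trans_lt hfin
      have := h a ha (pos_iff_ne_zero.2 h0) hfa
      rw [setLIntegral_eq μ f hf a ha.le, ENNReal.ofReal_add ha.le hM, add_mul, add_comm] at this
      exact (ENNReal.add_le_add_iff_left (ENNReal.mul_ne_top ENNReal.ofReal_ne_top hfa.ne)).1 this
  have hG : ∀ a : ℝ, l ≤ a → excess μ f a ≤ ENNReal.ofReal M * distrib μ f a := by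
    intro a hla
    rcases (hl.trans hla).lt_or_eq with ha | ha
    · exact hG1 a ha hla
    · have hfa : distrib μ f a < ⊤ := (distrib_anti μ f hla).trans_lt hfin
      have key : ∀ ε : ℝ, 0 < ε →
          excess μ f a ≤ ENNReal.ofReal M * distrib μ f a + ENNReal.ofReal ε * distrib μ f a := by
        intro ε hε
        refine (excess_upper μ f hf a ε hε.le).trans (add_le_add_left ?_ _)
        refine (hG1 (a + ε) (by linarith) (by linarith)).trans ?_
        exact mul_le_mul_right (distrib_anti μ f (by linarith)) _
      have ht : Filter.Tendsto (fun ε : ℝ => ENNReal.ofReal M * distrib μ f a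
          + ENNReal.ofReal ε * distrib μ f a) (nhdsWithin 0 (Ioi 0))
          (nhds (ENNReal.ofReal M * distrib μ f a + ENNReal.ofReal 0 * distrib μ f a)) := by
        refine Filter.Tendsto.mono_left ?_ nhdsWithin_le_nhds
        refine Filter.Tendsto.add tendsto_const_nhds ?_
        refine ENNReal.Tendsto.mul_const ?_ (Or.inr hfa.ne)
        exact (ENNReal.continuous_ofReal.tendsto 0)
      have := ge_of_tendsto ht (by filter_upwards [self_mem_nhdsWithin] with ε hε using key ε hε)
      simpa using this
  rcases hM.eq_or_lt with hM0 | hMpos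
  · exfalso
    have := hG l le_rfl
    rw [← hM0, ENNReal.ofReal_zero, zero_mul, nonpos_iff_eq_zero, excess_zero μ f hf] at this
    exact hpos.ne' this
  have hiter : ∀ n : ℕ, 2 ^ n * excess μ f (l + n * M) ≤ ENNReal.ofReal M * distrib μ f l := by
    intro n
    induction n with
    | zero => simpa using hG l le_rfl
    | succ n ih =>
      refine le_trans ?_ ih
      rw [pow_succ, mul_assoc]
      refine mul_le_mul_right ?_ _
      have e : l + ((n + 1 : ℕ) : ℝ) * M = l + n * M + M := by push_cast; ring
      rw [e, two_mul]
      refine le_trans (add_le_add_right (hG _ ?_) _) (excess_lower μ f hf _ M hM)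
      have : 0 ≤ (n : ℝ) * M := by positivity
      linarith
  have hd : ∀ n : ℕ, 2 ^ n * distrib μ f (l + n * M + M) ≤ distrib μ f l := by
    intro n
    have h1 := (mul_le_mul_right ((le_add_self).trans
      (excess_lower μ f hf (l + n * M) M hM)) (2 ^ n)).trans (hiter n)
    rw [mul_left_comm] at h1
    exact (ENNReal.mul_le_mul_iff_right (by simpa using hMpos) ENNReal.ofReal_ne_top).1 h1
  have hmain : distrib μ f (l + γ * M) ≤ ENNReal.ofReal (2 ^ (2 - γ)) * distrib μ f l := by
    obtain ⟨n, hn⟩ : ∃ n : ℕ, ⌊γ⌋₊ = n + 1 :=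
      Nat.exists_eq_succ_of_ne_zero (Nat.floor_pos.2 hγ.le).ne'
    have h1 : (n : ℝ) + 1 ≤ γ := by
      have := Nat.floor_le (show 0 ≤ γ by linarith)
      rw [hn] at this; exact_mod_cast this
    have h2 : γ < (n : ℝ) + 2 := by
      have := Nat.lt_floor_add_one γ
      rw [hn] at this; push_cast at this; linarith
    have h3 : distrib μ f (l + γ * M) ≤ distrib μ f (l + n * M + M) :=
      distrib_anti μ f (by nlinarith)
    have h4 : (1 : ℝ≥0∞) ≤ ENNReal.ofReal (2 ^ (2 - γ)) * 2 ^ n := by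
      have : (2 : ℝ≥0∞) ^ n = ENNReal.ofReal (2 ^ (n : ℝ)) := by
        rw [Real.rpow_natCast, ENNReal.ofReal_pow (by norm_num)]; simp
      rw [this, ← ENNReal.ofReal_mul (by positivity), ← Real.rpow_add (by norm_num),
        ENNReal.one_le_ofReal]
      exact Real.one_le_rpow (by norm_num) (by linarith)
    calc distrib μ f (l + γ * M) ≤ 1 * distrib μ f (l + n * M + M) := by rwa [one_mul]
      _ ≤ (ENNReal.ofReal (2 ^ (2 - γ)) * 2 ^ n) * distrib μ f (l + n * M + M) :=
        mul_le_mul_left h4 _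
      _ ≤ _ := by rw [mul_assoc]; exact mul_le_mul_right (hd n) _
  change _ ≤ _ / distrib μ f l
  rw [ENNReal.le_div_iff_mul_le (Or.inl hpos.ne') (Or.inl hfin.ne),
    ENNReal.ofReal_sub _ (by positivity), ENNReal.ofReal_one,
    ENNReal.sub_mul (fun _ _ => hfin.ne), one_mul, tsub_le_iff_right]
  refine le_trans ?_ (add_le_add_right hmain _)
  refine le_trans (measure_mono ?_) (measure_union_le _ _)
  intro x hx
  rcases le_or_gt |f x| (l + γ * M) with h' | h'
  · exact Or.inl ⟨hx, h'⟩
  · exact Or.inr h'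
end

section
/- Let f : ℝⁿ → ℝ be defined by f(x) = log(|x|^{−n}) for x in the open unit ball B(0,1) with x ≠ 0, f(x) = 0 otherwise (and f(0) = 0). Then for all λ ≥ 0, ∫_{{x ∈ ℝⁿ : |f(x)| > λ}} |f(y)| dy = (λ + 1) · |{x ∈ ℝⁿ : |f(x)| > λ}|, where |·| denotes Lebesgue measure; in particular f belongs to weak L^∞(ℝⁿ). -/
open MeasureTheory Set ENNReal

open Classical in
/-- The function `f(x) = log(|x|^{-n}) χ_{B(0,1)}(x)`, with `f(0) = 0`. -/
noncomputable def fex (n : ℕ) (x : EuclideanSpace ℝ (Fin n)) : ℝ :=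
  if x ≠ 0 ∧ ‖x‖ < 1 then Real.log (‖x‖ ^ (-(n : ℝ))) else 0

theorem fex_set (n : ℕ) (hn : 0 < n) (l : ℝ) (hl : 0 ≤ l) :
    {x : EuclideanSpace ℝ (Fin n) | l < |fex n x|} =
      Metric.ball 0 (Real.exp (-l / n)) \ {0} := by
  have hn' : (0 : ℝ) < n := by exact_mod_cast hn
  ext x
  simp only [mem_ofPred_eq, mem_sdiff, Metric.mem_ball, dist_zero_right, mem_singleton_iff]
  unfold fex
  by_cases hx : x = 0
  · simp [hx, hl]
  have hp : 0 < ‖x‖ := norm_pos_iff.mpr hx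
  by_cases h1 : ‖x‖ < 1
  · rw [if_pos ⟨hx, h1⟩, Real.log_rpow hp]
    have hlog : Real.log ‖x‖ < 0 := Real.log_neg hp h1
    rw [abs_of_pos (by nlinarith), ← Real.log_lt_iff_lt_exp hp, lt_div_iff₀ hn']
    constructor
    · intro h
      exact ⟨by nlinarith, hx⟩
    · rintro ⟨h, -⟩
      nlinarith
  · rw [if_neg (by tauto)]
    simp only [abs_zero]
    constructor
    · intro h
      linarith
    · rintro ⟨h, -⟩
      exfalso
      apply h1
      refine h.trans_le (Real.exp_le_one_iff.mpr ?_)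
      exact div_nonpos_of_nonpos_of_nonneg (by linarith) hn'.le

theorem fex_vol (n : ℕ) (hn : 0 < n) (l : ℝ) (hl : 0 ≤ l) :
    volume {x : EuclideanSpace ℝ (Fin n) | l < |fex n x|} =
      ENNReal.ofReal (Real.exp (-l)) * volume (Metric.ball (0 : EuclideanSpace ℝ (Fin n)) 1) := by
  have hn' : (n : ℝ) ≠ 0 := by exact_mod_cast hn.ne'
  have : Nonempty (Fin n) := ⟨⟨0, hn⟩⟩
  have : Nontrivial (EuclideanSpace ℝ (Fin n)) := inferInstance
  rw [fex_set n hn l hl, measure_sdiff_null (measure_singleton _),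
    Measure.addHaar_ball _ _ (Real.exp_pos _).le, finrank_euclideanSpace_fin, ← Real.exp_nat_mul]
  congr 3
  field_simp

theorem fex_meas (n : ℕ) : Measurable (fex n) := by
  unfold fex
  refine Measurable.ite ?_ (by fun_prop) measurable_const
  exact (measurableSet_singleton 0).compl.inter (measurableSet_lt measurable_norm measurable_const)

theorem min_int (l : ℝ) (hl : 0 ≤ l) :
    ∫⁻ s in Ioi (0 : ℝ), ENNReal.ofReal (Real.exp (-(max l s))) =
      ENNReal.ofReal (l + 1) * ENNReal.ofReal (Real.exp (-l)) := by
  rw [← Ioc_union_Ioi_eq_Ioi hl, lintegral_union measurableSet_Ioi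
    (Set.disjoint_left.mpr fun x hx hx' => absurd hx.2 (not_le.mpr hx'))]
  have e1 : ∫⁻ s in Ioc 0 l, ENNReal.ofReal (Real.exp (-(max l s))) =
      ENNReal.ofReal l * ENNReal.ofReal (Real.exp (-l)) := by
    rw [setLIntegral_congr_fun (g := fun _ => ENNReal.ofReal (Real.exp (-l))) measurableSet_Ioc
      (fun s hs => by simp only [max_eq_left hs.2])]
    simp [mul_comm]
  have e2 : ∫⁻ s in Ioi l, ENNReal.ofReal (Real.exp (-(max l s))) =
      ENNReal.ofReal (Real.exp (-l)) := by
    rw [setLIntegral_congr_fun (g := fun s => ENNReal.ofReal (Real.exp (-s))) measurableSet_Ioi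
      (fun s hs => by simp only [max_eq_right (le_of_lt (mem_Ioi.mp hs))])]
    rw [← ofReal_integral_eq_lintegral_ofReal (integrableOn_exp_neg_Ioi l)
      (Filter.Eventually.of_forall fun s => (Real.exp_pos _).le), integral_exp_neg_Ioi]
  rw [e1, e2, ENNReal.ofReal_add hl zero_le_one, add_mul]
  simp

theorem fex_part1 (n : ℕ) (hn : 0 < n) (l : ℝ) (hl : 0 ≤ l) :
      ∫⁻ x in {x : EuclideanSpace ℝ (Fin n) | l < |fex n x|}, ENNReal.ofReal |fex n x| =
        ENNReal.ofReal (l + 1) *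
          volume {x : EuclideanSpace ℝ (Fin n) | l < |fex n x|} := by
  have hm : Measurable fun x => |fex n x| := (fex_meas n).abs
  rw [lintegral_eq_lintegral_meas_lt _ (Filter.Eventually.of_forall fun x => abs_nonneg _)
    hm.aemeasurable]
  rw [setLIntegral_congr_fun (g := fun s => ENNReal.ofReal (Real.exp (-(max l s))) *
    volume (Metric.ball (0 : EuclideanSpace ℝ (Fin n)) 1)) measurableSet_Ioi]
  · rw [lintegral_mul_const _ (by fun_prop), min_int l hl, fex_vol n hn l hl, mul_assoc]
  · intro s hs
    simp only
    rw [Measure.restrict_apply (measurableSet_lt measurable_const hm),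
      ← fex_vol n hn _ (le_max_of_le_left hl)]
    congr 1
    ext x
    simp [and_comm]

theorem fex_vol' (n : ℕ) (hn : 0 < n) (l : ℝ) (hl : 0 ≤ l) :
    volume {x : EuclideanSpace ℝ (Fin n) | ENNReal.ofReal l < ENNReal.ofReal |fex n x|} =
      ENNReal.ofReal (Real.exp (-l)) * volume (Metric.ball (0 : EuclideanSpace ℝ (Fin n)) 1) := by
  rw [← fex_vol n hn l hl]
  simp only [ENNReal.ofReal_lt_ofReal_iff_of_nonneg hl]

theorem rearr_fin (n : ℕ) (hn : 0 < n) (t : ℝ) (ht : 0 < t) :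
    rearr (volume : Measure (EuclideanSpace ℝ (Fin n))) (fex n) t ≠ ⊤ := by
  set V := volume (Metric.ball (0 : EuclideanSpace ℝ (Fin n)) 1) with hV
  have hVt : V ≠ ⊤ := measure_ball_lt_top.ne
  obtain ⟨l, hl0, hl⟩ : ∃ l : ℝ, 0 ≤ l ∧ Real.exp (-l) * V.toReal ≤ t := by
    have h1 : Filter.Tendsto (fun l : ℝ => Real.exp (-l) * V.toReal) Filter.atTop (nhds 0) := by
      simpa using Real.tendsto_exp_neg_atTop_nhds_zero.mul_const V.toReal
    obtain ⟨l, h, h'⟩ := ((h1.eventually_le_const ht).and (Filter.eventually_ge_atTop 0)).exists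
    exact ⟨l, h', h⟩
  refine ne_top_of_le_ne_top (ENNReal.ofReal_ne_top (r := l)) (sInf_le ?_)
  simp only [mem_ofPred_eq]
  rw [fex_vol' n hn l hl0, ← hV, ← ENNReal.ofReal_toReal hVt,
    ← ENNReal.ofReal_mul (Real.exp_pos _).le]
  exact ENNReal.ofReal_le_ofReal hl

theorem rearr_le (n : ℕ) (hn : 0 < n) (s t : ℝ) (hs : 0 < s) (hst : s ≤ t) :
    rearr (volume : Measure (EuclideanSpace ℝ (Fin n))) (fex n) s ≤
      rearr (volume : Measure (EuclideanSpace ℝ (Fin n))) (fex n) t +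
        ENNReal.ofReal (Real.log t - Real.log s) := by
  have ht : 0 < t := hs.trans_le hst
  have hlog : 0 ≤ Real.log t - Real.log s := sub_nonneg.mpr (Real.log_le_log hs hst)
  conv_rhs => rw [rearr, ENNReal.sInf_add]
  refine le_iInf₂ fun b hb => ?_
  by_cases hbt : b = ⊤
  · simp [hbt]
  rw [← ENNReal.ofReal_toReal hbt] at hb ⊢
  set r := b.toReal
  have hr : 0 ≤ r := ENNReal.toReal_nonneg
  simp only [mem_ofPred_eq] at hb
  rw [fex_vol' n hn r hr] at hb
  rw [← ENNReal.ofReal_add hr hlog]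
  refine sInf_le ?_
  simp only [mem_ofPred_eq]
  rw [fex_vol' n hn _ (add_nonneg hr hlog)]
  have e : Real.exp (-(r + (Real.log t - Real.log s))) = (s / t) * Real.exp (-r) := by
    rw [show -(r + (Real.log t - Real.log s)) = Real.log s - Real.log t + -r by ring,
      Real.exp_add, Real.exp_sub, Real.exp_log hs, Real.exp_log ht]
  rw [e, ENNReal.ofReal_mul (by positivity), mul_assoc]
  calc _ ≤ ENNReal.ofReal (s / t) * ENNReal.ofReal t := by gcongr
    _ = ENNReal.ofReal s := by
      rw [← ENNReal.ofReal_mul (by positivity)]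
      congr 1
      field_simp

theorem log_int (t : ℝ) (ht : 0 < t) :
    ∫⁻ s in Ioc (0 : ℝ) t, ENNReal.ofReal (Real.log t - Real.log s) = ENNReal.ofReal t := by
  have hi : IntervalIntegrable (fun s => Real.log t - Real.log s) volume 0 t :=
    intervalIntegrable_const.sub intervalIntegral.intervalIntegrable_log'
  rw [← ofReal_integral_eq_lintegral_ofReal hi.1, ← intervalIntegral.integral_of_le ht.le,
    intervalIntegral.integral_sub intervalIntegrable_const intervalIntegral.intervalIntegrable_log',
    integral_log]
  · simp
  · filter_upwards [ae_restrict_mem measurableSet_Ioc] with s hs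
    exact sub_nonneg.mpr (Real.log_le_log hs.1 hs.2)

/-- for `f(x) = log(|x|^{-n}) χ_{B(0,1)}` on `ℝⁿ` one has
`∫_{|f|>λ} |f| = (λ + 1) |{|f| > λ}|` for all `λ ≥ 0`; in particular `f` belongs to
weak `L^∞(ℝⁿ)`. -/
theorem stmt8 (n : ℕ) (hn : 0 < n) :
    (∀ l : ℝ, 0 ≤ l →
      ∫⁻ x in {x : EuclideanSpace ℝ (Fin n) | l < |fex n x|}, ENNReal.ofReal |fex n x| =
        ENNReal.ofReal (l + 1) *
          volume {x : EuclideanSpace ℝ (Fin n) | l < |fex n x|}) ∧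
    (∀ t : ℝ, 0 < t → rearr (volume : Measure (EuclideanSpace ℝ (Fin n))) (fex n) t ≠ ⊤) ∧
    (∃ M : ℝ, 0 ≤ M ∧ ∀ t : ℝ, 0 < t →
      maxfn (volume : Measure (EuclideanSpace ℝ (Fin n))) (fex n) t -
          rearr (volume : Measure (EuclideanSpace ℝ (Fin n))) (fex n) t ≤
        ENNReal.ofReal M) := by
  refine ⟨fex_part1 n hn, rearr_fin n hn, 1, zero_le_one, fun t ht => ?_⟩
  rw [tsub_le_iff_right, maxfn]
  have ht0 : ENNReal.ofReal t ≠ 0 := by simpa using ht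
  rw [ENNReal.div_le_iff ht0 ENNReal.ofReal_ne_top]
  calc _ ≤ ∫⁻ s in Ioc (0 : ℝ) t,
        (rearr (volume : Measure (EuclideanSpace ℝ (Fin n))) (fex n) t +
          ENNReal.ofReal (Real.log t - Real.log s)) :=
        setLIntegral_mono' measurableSet_Ioc fun s hs => rearr_le n hn s t hs.1 hs.2
    _ = _ := by
      rw [lintegral_add_left measurable_const, log_int t ht]
      simp [add_mul, add_comm]
end

section
/- Let (X,d,μ) be a metric measure space and let f ∈ L¹_loc(X). Suppose there exists M ≥ 0 such that for all λ ≥ 0 and all balls B ⊂ X, ∫_{{x ∈ B : |f(x) − f_B| > λ}} |f − f_B| dμ ≤ (λ + M) · μ({x ∈ B : |f(x) − f_B| > λ}). Then there exist constants c₁, c₂ > 0 such that μ({x ∈ B : |f(x) − f_B| > λ₂}) ≤ c₁ · μ({x ∈ B : |f(x) − f_B| > λ₁}) · e^{c₂(λ₂ − λ₁)·(−1)} — that is, ≤ c₁ μ({|f − f_B| > λ₁}) e^{c₂(λ₁ − λ₂)} — for all 0 ≤ λ₁ < λ₂ and all balls B ⊂ X (one may take c₁ = 4 and c₂ = (log 2)/M).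 -/
open MeasureTheory Metric Set ENNReal

/-- The mean value `f_B = ⨍_B f dμ` of `f` over a set `B`. -/
noncomputable def meanOn {X : Type*} [MeasurableSpace X] (μ : Measure X) (f : X → ℝ)
    (B : Set X) : ℝ :=
  ⨍ y in B, f y ∂μ

theorem tail_half {X : Type*} [MeasurableSpace X] (μ : Measure X) (B : Set X)
    (hB : MeasurableSet B) (hfin : μ B < ⊤) (g : X → ℝ)
    (hg : AEMeasurable g (μ.restrict B)) (K : ℝ) (hK : 0 < K) (l : ℝ) (hl : 0 ≤ l)
    (h : ∫⁻ y in {y | y ∈ B ∧ l < g y}, ENNReal.ofReal (g y) ∂μ ≤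
      ENNReal.ofReal (l + K) * μ {y | y ∈ B ∧ l < g y}) :
    μ {y | y ∈ B ∧ l + 2 * K < g y} ≤
      ENNReal.ofReal (Real.exp (-(1/2))) * μ {y | y ∈ B ∧ l < g y} := by
  have hnull : ∀ t : ℝ, NullMeasurableSet {y | y ∈ B ∧ t < g y} μ := by
    intro t
    have h1 : NullMeasurableSet {y | t < g y} (μ.restrict B) :=
      nullMeasurableSet_lt aemeasurable_const hg
    have h2 := (nullMeasurableSet_restrict hB.nullMeasurableSet).1 h1
    have : {y | y ∈ B ∧ t < g y} = {y | t < g y} ∩ B := by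
      ext y; simp [and_comm]
    rw [this]; exact h2
  set E := {y | y ∈ B ∧ l < g y} with hE
  set F := {y | y ∈ B ∧ l + 2 * K < g y} with hF
  have hFE : F ⊆ E := fun y hy => ⟨hy.1, by have := hy.2; linarith⟩
  have hEfin : μ E ≠ ⊤ := ((measure_mono (fun y hy => hy.1)).trans_lt hfin).ne
  have hFfin : μ F ≠ ⊤ := ((measure_mono (fun y hy => hy.1)).trans_lt hfin).ne
  have key : ENNReal.ofReal l * μ E + ENNReal.ofReal (2 * K) * μ F ≤
      ∫⁻ y in E, ENNReal.ofReal (g y) ∂μ := by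
    have h1 : ∫⁻ y in E, (ENNReal.ofReal l + F.indicator (fun _ => ENNReal.ofReal (2 * K)) y) ∂μ
        = ENNReal.ofReal l * μ E + ENNReal.ofReal (2 * K) * μ F := by
      rw [lintegral_add_left measurable_const, lintegral_const,
        lintegral_indicator_const₀ ((hnull _).mono_ac Measure.restrict_le_self.absolutelyContinuous),
        Measure.restrict_apply_univ, Measure.restrict_eq_self _ hFE]
    rw [← h1]
    apply lintegral_mono_ae
    filter_upwards [ae_restrict_mem₀ (hnull l)] with y hy
    by_cases hyF : y ∈ F
    · rw [indicator_of_mem hyF, ← ENNReal.ofReal_add hl (by positivity)]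
      exact ENNReal.ofReal_le_ofReal hyF.2.le
    · rw [indicator_of_notMem hyF, add_zero]
      exact ENNReal.ofReal_le_ofReal hy.2.le
  have h3 := key.trans h
  have hexp : (1/2 : ℝ) ≤ Real.exp (-(1/2)) := by
    have := Real.add_one_le_exp (-(1/2) : ℝ); linarith
  rw [← ENNReal.ofReal_toReal hEfin, ← ENNReal.ofReal_toReal hFfin] at h3 ⊢
  have e0 : 0 ≤ (μ E).toReal := ENNReal.toReal_nonneg
  have f0 : 0 ≤ (μ F).toReal := ENNReal.toReal_nonneg
  generalize (μ E).toReal = a at *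
  generalize (μ F).toReal = b at *
  rw [← ENNReal.ofReal_mul hl, ← ENNReal.ofReal_mul (by positivity),
    ← ENNReal.ofReal_mul (by positivity), ← ENNReal.ofReal_add (by positivity) (by positivity),
    ENNReal.ofReal_le_ofReal_iff (by positivity)] at h3
  rw [← ENNReal.ofReal_mul (by positivity)]
  apply ENNReal.ofReal_le_ofReal
  have h4 : K * (2 * b) ≤ K * a := by linarith
  have h5 := le_of_mul_le_mul_left h4 hK
  nlinarith

/-- if `f ∈ L¹_loc(X)` satisfies the bounded mean tail oscillation condition
`∫_{{x ∈ B : |f - f_B| > λ}} |f - f_B| dμ ≤ (λ + M) μ({x ∈ B : |f - f_B| > λ})` for all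
`λ ≥ 0` and all balls `B`, then there are `c₁, c₂ > 0` with
`μ({x ∈ B : |f - f_B| > λ₂}) ≤ c₁ μ({x ∈ B : |f - f_B| > λ₁}) e^{c₂(λ₁ - λ₂)}`
for all `0 ≤ λ₁ < λ₂` and all balls `B`. -/
theorem stmt9 {X : Type*} [MetricSpace X] [MeasurableSpace X] [BorelSpace X]
    (μ : Measure X)
    (hball : ∀ (x : X) (r : ℝ), 0 < r → 0 < μ (ball x r) ∧ μ (ball x r) < ⊤)
    (f : X → ℝ) (hf : ∀ (x : X) (r : ℝ), 0 < r → IntegrableOn f (ball x r) μ)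
    (M : ℝ) (hM : 0 ≤ M)
    (h : ∀ (x : X) (r : ℝ), 0 < r → ∀ l : ℝ, 0 ≤ l →
      ∫⁻ y in {y | y ∈ ball x r ∧ l < |f y - meanOn μ f (ball x r)|},
          ENNReal.ofReal |f y - meanOn μ f (ball x r)| ∂μ ≤
        ENNReal.ofReal (l + M) *
          μ {y | y ∈ ball x r ∧ l < |f y - meanOn μ f (ball x r)|}) :
    ∃ c₁ c₂ : ℝ, 0 < c₁ ∧ 0 < c₂ ∧
      ∀ (x : X) (r : ℝ), 0 < r → ∀ l₁ l₂ : ℝ, 0 ≤ l₁ → l₁ < l₂ →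
        μ {y | y ∈ ball x r ∧ l₂ < |f y - meanOn μ f (ball x r)|} ≤
          ENNReal.ofReal (c₁ * Real.exp (c₂ * (l₁ - l₂))) *
            μ {y | y ∈ ball x r ∧ l₁ < |f y - meanOn μ f (ball x r)|} := by
  have hK : 0 < M + 1 := by linarith
  set K := M + 1 with hKdef
  refine ⟨Real.exp (1/2), 1 / (4 * K), Real.exp_pos _, by positivity, ?_⟩
  intro x r hr l₁ l₂ hl₁ hl
  have hiter : ∀ n : ℕ, μ {y | y ∈ ball x r ∧ l₁ + n * (2 * K) < |f y - meanOn μ f (ball x r)|} ≤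
      ENNReal.ofReal (Real.exp (-(n/2))) *
        μ {y | y ∈ ball x r ∧ l₁ < |f y - meanOn μ f (ball x r)|} := by
    intro n
    induction n with
    | zero => simp
    | succ n ih =>
      have h0 : 0 ≤ l₁ + n * (2 * K) := by positivity
      have hm : AEMeasurable (fun y => |f y - meanOn μ f (ball x r)|) (μ.restrict (ball x r)) :=
        ((hf x r hr).aestronglyMeasurable.aemeasurable.sub_const _).abs
      have := tail_half μ (ball x r) measurableSet_ball (hball x r hr).2 _ hm K hK
        (l₁ + n * (2 * K)) h0 ((h x r hr _ h0).trans (by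
          gcongr
          linarith))
      have e : l₁ + ((n + 1 : ℕ) : ℝ) * (2 * K) = l₁ + n * (2 * K) + 2 * K := by
        push_cast; ring
      rw [e]
      refine this.trans ((mul_le_mul_right ih _).trans ?_)
      rw [← mul_assoc, ← ENNReal.ofReal_mul (Real.exp_pos _).le, ← Real.exp_add]
      apply le_of_eq
      congr 3
      push_cast; ring
  have ht : 0 ≤ (l₂ - l₁) / (2 * K) := div_nonneg (by linarith) (by linarith)
  have hn1 := Nat.floor_le ht
  have hn2 := Nat.lt_floor_add_one ((l₂ - l₁) / (2 * K))
  set n := ⌊(l₂ - l₁) / (2 * K)⌋₊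
  rw [le_div_iff₀ (by positivity)] at hn1
  refine (measure_mono ?_).trans ((hiter n).trans ?_)
  · intro y hy
    exact ⟨hy.1, by have := hy.2; linarith⟩
  · rw [← Real.exp_add]
    gcongr
    have : 1 / (4 * K) * (l₁ - l₂) = -((l₂ - l₁) / (2 * K)) / 2 := by
      field_simp; ring
    rw [this]; linarith
end

section
/- Let (X,d,μ) be a metric measure space and let f ∈ L¹_loc(X). Suppose there exist constants c₁, c₂ > 0 such that μ({x ∈ B : |f(x) − f_B| > λ₂}) ≤ c₁ · μ({x ∈ B : |f(x) − f_B| > λ₁}) · e^{c₂(λ₁ − λ₂)} for all 0 ≤ λ₁ < λ₂ and all balls B ⊂ X. Then with M = c₁/c₂, for all λ ≥ 0 and all balls B ⊂ X, ∫_{{x ∈ B : |f(x) − f_B| > λ}} |f − f_B| dμ ≤ (λ + M) · μ({x ∈ B : |f(x) − f_B| > λ}). -/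
open MeasureTheory Metric Set ENNReal

/-- if `μ({x ∈ B : |f - f_B| > λ₂}) ≤ c₁ μ({x ∈ B : |f - f_B| > λ₁}) e^{c₂(λ₁-λ₂)}`
for all `0 ≤ λ₁ < λ₂` and all balls `B`, then with `M = c₁/c₂`, for all `λ ≥ 0` and all balls,
`∫_{{x ∈ B : |f - f_B| > λ}} |f - f_B| dμ ≤ (λ + M) μ({x ∈ B : |f - f_B| > λ})`. -/
theorem stmt10 {X : Type*} [MetricSpace X] [MeasurableSpace X] [BorelSpace X]
    (μ : Measure X)
    (hball : ∀ (x : X) (r : ℝ), 0 < r → 0 < μ (ball x r) ∧ μ (ball x r) < ⊤)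
    (f : X → ℝ) (hf : ∀ (x : X) (r : ℝ), 0 < r → IntegrableOn f (ball x r) μ)
    (c₁ c₂ : ℝ) (hc₁ : 0 < c₁) (hc₂ : 0 < c₂)
    (h : ∀ (x : X) (r : ℝ), 0 < r → ∀ l₁ l₂ : ℝ, 0 ≤ l₁ → l₁ < l₂ →
      μ {y | y ∈ ball x r ∧ l₂ < |f y - meanOn μ f (ball x r)|} ≤
        ENNReal.ofReal (c₁ * Real.exp (c₂ * (l₁ - l₂))) *
          μ {y | y ∈ ball x r ∧ l₁ < |f y - meanOn μ f (ball x r)|}) :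
    ∀ (x : X) (r : ℝ), 0 < r → ∀ l : ℝ, 0 ≤ l →
      ∫⁻ y in {y | y ∈ ball x r ∧ l < |f y - meanOn μ f (ball x r)|},
          ENNReal.ofReal |f y - meanOn μ f (ball x r)| ∂μ ≤
        ENNReal.ofReal (l + c₁ / c₂) *
          μ {y | y ∈ ball x r ∧ l < |f y - meanOn μ f (ball x r)|} := by
  intro x r hr l hl
  set B := ball x r with hB
  set c := meanOn μ f B with hc
  set S := {y | y ∈ B ∧ l < |f y - c|} with hS
  have hSB : S ⊆ B := fun y hy => hy.1
  have hfm : AEMeasurable f (μ.restrict S) :=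
    (hf x r hr).aestronglyMeasurable.aemeasurable.mono_measure (Measure.restrict_mono hSB le_rfl)
  have hphi : AEMeasurable (fun y => max (|f y - c| - l) 0) (μ.restrict S) := by
    have h1 : AEMeasurable (fun y => f y - c) (μ.restrict S) := hfm.sub_const c
    have h2 : AEMeasurable (fun y => |f y - c|) (μ.restrict S) :=
      continuous_abs.measurable.comp_aemeasurable h1
    exact (h2.sub_const l).max aemeasurable_const
  have hint : IntegrableOn (fun t : ℝ => c₁ * Real.exp (-c₂ * t)) (Ioi 0) :=
    (integrableOn_exp_mul_Ioi (neg_lt_zero.2 hc₂) 0).const_mul c₁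
  have hexp : ∫⁻ t in Ioi (0:ℝ), ENNReal.ofReal (c₁ * Real.exp (-c₂ * t))
      = ENNReal.ofReal (c₁ / c₂) := by
    rw [← ofReal_integral_eq_lintegral_ofReal hint
      (Filter.Eventually.of_forall fun t => by positivity)]
    rw [integral_const_mul, integral_exp_mul_Ioi (neg_lt_zero.2 hc₂) 0]
    congr 1
    simp
    rfl
  have hlayer : ∫⁻ y in S, ENNReal.ofReal (max (|f y - c| - l) 0) ∂μ
      ≤ ENNReal.ofReal (c₁ / c₂) * μ S := by
    rw [lintegral_eq_lintegral_meas_lt (f := fun y => max (|f y - c| - l) 0) _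
      (Filter.Eventually.of_forall fun y => le_max_right _ _) hphi, ← hexp,
      ← lintegral_mul_const _ (by fun_prop)]
    refine setLIntegral_mono' measurableSet_Ioi fun t ht => ?_
    have ht : 0 < t := ht
    rw [Measure.restrict_apply₀ (nullMeasurableSet_lt aemeasurable_const hphi)]
    have h3 := h x r hr l (l + t) hl (by linarith)
    have h4 : c₂ * (l - (l + t)) = -c₂ * t := by ring
    rw [h4] at h3
    refine (measure_mono ?_).trans h3
    rintro y ⟨hy, hyS⟩
    refine ⟨hyS.1, ?_⟩
    have hy' : t < max (|f y - c| - l) 0 := hy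
    rcases lt_max_iff.1 hy' with h5 | h5
    · linarith
    · linarith
  calc ∫⁻ y in S, ENNReal.ofReal |f y - c| ∂μ
      ≤ ∫⁻ y in S, (ENNReal.ofReal l + ENNReal.ofReal (max (|f y - c| - l) 0)) ∂μ := by
        refine lintegral_mono fun y => ?_
        rw [← ENNReal.ofReal_add hl (le_max_right _ _)]
        refine ENNReal.ofReal_le_ofReal ?_
        linarith [le_max_left (|f y - c| - l) 0]
    _ = ENNReal.ofReal l * μ S + ∫⁻ y in S, ENNReal.ofReal (max (|f y - c| - l) 0) ∂μ := by
        rw [lintegral_add_left measurable_const, setLIntegral_const]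
    _ ≤ ENNReal.ofReal l * μ S + ENNReal.ofReal (c₁ / c₂) * μ S := by gcongr
    _ = ENNReal.ofReal (l + c₁ / c₂) * μ S := by
        rw [ENNReal.ofReal_add hl (by positivity), add_mul]
end

section
/- Let (X,d,μ) be a metric measure space and let f ∈ L¹_loc(X) be of bounded mean tail oscillation with constant M ≥ 0, i.e. ∫_{{x ∈ B : |f(x) − f_B| > λ}} |f − f_B| dμ ≤ (λ + M)·μ({x ∈ B : |f(x) − f_B| > λ}) for all λ ≥ 0 and all balls B. Then f is of bounded mean oscillation with sup_B ⨍_B |f − f_B| dμ ≤ M, and f satisfies the John–Nirenberg inequality: there exist constants c₁, c₂ > 0 such that μ({x ∈ B : |f(x) − f_B| > λ}) ≤ c₁ · μ(B) · e^{−c₂ λ / M} for all λ > 0 and all balls B ⊂ X. -/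
open MeasureTheory Metric Set ENNReal

/-- One step of the decay of the distribution function. -/
theorem tail_step {X : Type*} [MeasurableSpace X] (ν : Measure X) [IsFiniteMeasure ν]
    (g : X → ℝ) (hg : AEMeasurable g ν) (M : ℝ) (hM : 0 < M) (l : ℝ) (hl : 0 ≤ l)
    (h : ∫⁻ y in {y | l < g y}, ENNReal.ofReal (g y) ∂ν ≤
      ENNReal.ofReal (l + M) * ν {y | l < g y}) :
    ν.real {y | l + 2 * M < g y} ≤ ν.real {y | l < g y} / 2 := by
  have hE : ∀ a : ℝ, NullMeasurableSet {y | a < g y} ν := fun a =>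
    nullMeasurableSet_lt aemeasurable_const hg
  have hsub : {y | l + 2 * M < g y} ⊆ {y | l < g y} := by
    intro y hy
    simp only [mem_ofPred_eq] at hy ⊢
    linarith
  have key : ENNReal.ofReal l * ν {y | l < g y} + ENNReal.ofReal (2 * M) * ν {y | l + 2 * M < g y}
      ≤ ∫⁻ y in {y | l < g y}, ENNReal.ofReal (g y) ∂ν := by
    calc _ = ∫⁻ y in {y | l < g y}, (ENNReal.ofReal l +
          ({y | l + 2 * M < g y}.indicator (fun _ => ENNReal.ofReal (2 * M)) y)) ∂ν := by
          rw [lintegral_add_left measurable_const, lintegral_const,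
            lintegral_indicator_const₀ ((hE _).mono_ac Measure.restrict_le_self.absolutelyContinuous)]
          rw [Measure.restrict_apply_univ, Measure.restrict_eq_self _ hsub]
      _ ≤ _ := by
          refine lintegral_mono_ae ?_
          filter_upwards [ae_restrict_mem₀ (hE l)] with y hy
          by_cases hy2 : l + 2 * M < g y
          · rw [indicator_of_mem (by exact hy2), ← ENNReal.ofReal_add hl (by positivity)]
            exact ENNReal.ofReal_le_ofReal hy2.le
          · rw [indicator_of_notMem (by exact hy2), add_zero]
            exact ENNReal.ofReal_le_ofReal (le_of_lt hy)
  have h2 := key.trans h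
  have f1 : ν {y | l < g y} ≠ ⊤ := measure_ne_top _ _
  have f2 : ν {y | l + 2 * M < g y} ≠ ⊤ := measure_ne_top _ _
  rw [← ofReal_measureReal f1, ← ofReal_measureReal f2, ← ENNReal.ofReal_mul hl,
    ← ENNReal.ofReal_mul (by positivity), ← ENNReal.ofReal_mul (by positivity),
    ← ENNReal.ofReal_add (by positivity) (by positivity),
    ENNReal.ofReal_le_ofReal_iff (by positivity)] at h2
  nlinarith

/-- Exponential decay of the distribution function. -/
theorem tail_decay {X : Type*} [MeasurableSpace X] (ν : Measure X) [IsFiniteMeasure ν]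
    (g : X → ℝ) (hg : AEMeasurable g ν) (M : ℝ) (hM : 0 < M)
    (h : ∀ l : ℝ, 0 ≤ l → ∫⁻ y in {y | l < g y}, ENNReal.ofReal (g y) ∂ν ≤
      ENNReal.ofReal (l + M) * ν {y | l < g y}) (l : ℝ) (hl : 0 < l) :
    ν.real {y | l < g y} ≤ 2 * Real.exp (-(Real.log 2 / 2) * l / M) * ν.real univ := by
  have it : ∀ n : ℕ, ν.real {y | n * (2 * M) < g y} ≤ (1 / 2) ^ n * ν.real univ := by
    intro n
    induction n with
    | zero => simpa using measureReal_mono (subset_univ _)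
    | succ n ih =>
      have := tail_step ν g hg M hM (n * (2 * M)) (by positivity) (h _ (by positivity))
      have e : ((n + 1 : ℕ) : ℝ) * (2 * M) = n * (2 * M) + 2 * M := by push_cast; ring
      rw [e, pow_succ]
      linarith
  set n := ⌊l / (2 * M)⌋₊ with hn
  have h1 : (n : ℝ) * (2 * M) ≤ l := by
    rw [← le_div_iff₀ (by positivity)]
    exact Nat.floor_le (by positivity)
  have h2 : l / (2 * M) < n + 1 := Nat.lt_floor_add_one _
  have h3 : ((1 : ℝ) / 2) ^ n ≤ 2 * Real.exp (-(Real.log 2 / 2) * l / M) := by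
    have e1 : ((1 : ℝ) / 2) ^ n = Real.exp (-(n * Real.log 2)) := by
      rw [Real.exp_neg, Real.exp_nat_mul, Real.exp_log (by norm_num)]
      simp
    have e2 : 2 * Real.exp (-(Real.log 2 / 2) * l / M) =
        Real.exp (Real.log 2 + -(Real.log 2 / 2) * l / M) := by
      rw [Real.exp_add, Real.exp_log (by norm_num)]
    rw [e1, e2, Real.exp_le_exp]
    have e3 : -(Real.log 2 / 2) * l / M = - (Real.log 2 * (l / (2 * M))) := by
      field_simp
    rw [e3]
    have := Real.log_pos (by norm_num : (1 : ℝ) < 2)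
    nlinarith
  calc ν.real {y | l < g y} ≤ ν.real {y | n * (2 * M) < g y} :=
        measureReal_mono (fun y hy => lt_of_le_of_lt h1 hy)
    _ ≤ (1 / 2) ^ n * ν.real univ := it n
    _ ≤ _ := by gcongr

/-- a function of bounded mean tail oscillation with constant `M` is of bounded
mean oscillation with `sup_B ⨍_B |f - f_B| dμ ≤ M`, and satisfies the John–Nirenberg
inequality `μ({x ∈ B : |f - f_B| > λ}) ≤ c₁ μ(B) e^{-c₂ λ / M}`. -/
theorem stmt11 {X : Type*} [MetricSpace X] [MeasurableSpace X] [BorelSpace X]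
    (μ : Measure X)
    (hball : ∀ (x : X) (r : ℝ), 0 < r → 0 < μ (ball x r) ∧ μ (ball x r) < ⊤)
    (f : X → ℝ) (hf : ∀ (x : X) (r : ℝ), 0 < r → IntegrableOn f (ball x r) μ)
    (M : ℝ) (hM : 0 ≤ M)
    (h : ∀ (x : X) (r : ℝ), 0 < r → ∀ l : ℝ, 0 ≤ l →
      ∫⁻ y in {y | y ∈ ball x r ∧ l < |f y - meanOn μ f (ball x r)|},
          ENNReal.ofReal |f y - meanOn μ f (ball x r)| ∂μ ≤
        ENNReal.ofReal (l + M) *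
          μ {y | y ∈ ball x r ∧ l < |f y - meanOn μ f (ball x r)|}) :
    (∀ (x : X) (r : ℝ), 0 < r →
      (⨍ y in ball x r, |f y - meanOn μ f (ball x r)| ∂μ) ≤ M) ∧
    (∃ c₁ c₂ : ℝ, 0 < c₁ ∧ 0 < c₂ ∧
      ∀ (x : X) (r : ℝ), 0 < r → ∀ l : ℝ, 0 < l →
        μ {y | y ∈ ball x r ∧ l < |f y - meanOn μ f (ball x r)|} ≤
          ENNReal.ofReal (c₁ * Real.exp (-c₂ * l / M)) * μ (ball x r)) := by
  have hset : ∀ (x : X) (r l : ℝ), {y | y ∈ ball x r ∧ l < |f y - meanOn μ f (ball x r)|} =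
      {y | l < |f y - meanOn μ f (ball x r)|} ∩ ball x r := by
    intro x r l
    ext y
    simp [and_comm]
  have hfin : ∀ (x : X) (r : ℝ), 0 < r → IsFiniteMeasure (μ.restrict (ball x r)) :=
    fun x r hr => ⟨by simpa using (hball x r hr).2⟩
  have hμ : ∀ (x : X) (r l : ℝ), μ {y | y ∈ ball x r ∧ l < |f y - meanOn μ f (ball x r)|} =
      μ.restrict (ball x r) {y | l < |f y - meanOn μ f (ball x r)|} := by
    intro x r l
    rw [hset, Measure.restrict_apply' measurableSet_ball]
  have h' : ∀ (x : X) (r : ℝ), 0 < r → ∀ l : ℝ, 0 ≤ l →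
      ∫⁻ y in {y | l < |f y - meanOn μ f (ball x r)|},
          ENNReal.ofReal |f y - meanOn μ f (ball x r)| ∂(μ.restrict (ball x r)) ≤
        ENNReal.ofReal (l + M) *
          μ.restrict (ball x r) {y | l < |f y - meanOn μ f (ball x r)|} := by
    intro x r hr l hl
    rw [← hμ, Measure.restrict_restrict' measurableSet_ball, ← hset]
    exact h x r hr l hl
  have hint : ∀ (x : X) (r : ℝ), 0 < r →
      Integrable (fun y => |f y - meanOn μ f (ball x r)|) (μ.restrict (ball x r)) := by
    intro x r hr
    have := hfin x r hr
    exact ((hf x r hr).sub (integrable_const _)).abs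
  refine ⟨?_, 2, Real.log 2 / 2, by norm_num, by positivity, ?_⟩
  · intro x r hr
    have := hfin x r hr
    have hi := hint x r hr
    have h0 := h' x r hr 0 le_rfl
    set c := meanOn μ f (ball x r)
    set ν := μ.restrict (ball x r) with hν
    have hpos : 0 < ν.real univ := by
      rw [measureReal_def, hν, Measure.restrict_apply_univ]
      exact ENNReal.toReal_pos (hball x r hr).1.ne' (hball x r hr).2.ne
    have hle : ∫⁻ y, ENNReal.ofReal |f y - c| ∂ν ≤ ENNReal.ofReal (M * ν.real univ) := by
      rw [ENNReal.ofReal_mul hM, ofReal_measureReal (measure_ne_top _ _)]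
      calc ∫⁻ y, ENNReal.ofReal |f y - c| ∂ν
          = ∫⁻ y in {y | 0 < |f y - c|}, ENNReal.ofReal |f y - c| ∂ν := by
            symm
            apply setLIntegral_eq_of_support_subset
            intro y hy
            simpa using hy
        _ ≤ _ := h0
        _ ≤ _ := by
            rw [zero_add]
            gcongr
            exact subset_univ _
    rw [average_eq, smul_eq_mul, inv_mul_le_iff₀ hpos, mul_comm,
      integral_eq_lintegral_of_nonneg_ae (Filter.Eventually.of_forall fun y => abs_nonneg _)
        hi.aestronglyMeasurable]
    exact ENNReal.toReal_le_of_le_ofReal (by positivity) hle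
  · intro x r hr l hl
    have := hfin x r hr
    rcases hM.eq_or_lt with rfl | hM
    · rw [_root_.div_zero, Real.exp_zero]
      calc _ ≤ 1 * μ (ball x r) := by
            rw [one_mul]
            exact measure_mono fun y hy => hy.1
        _ ≤ _ := by
            gcongr
            rw [← ENNReal.ofReal_one]
            exact ENNReal.ofReal_le_ofReal (by norm_num)
    · have key := tail_decay _ _ (hint x r hr).aemeasurable M hM (h' x r hr) l hl
      rw [hμ, ← Measure.restrict_apply_univ (μ := μ) (ball x r),
        ← ofReal_measureReal (measure_ne_top (μ.restrict (ball x r)) _),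
        ← ofReal_measureReal (measure_ne_top (μ.restrict (ball x r)) univ),
        ← ENNReal.ofReal_mul (by positivity)]
      exact ENNReal.ofReal_le_ofReal key
end

section
/- Let (X,d,μ) be a doubling metric measure space. A μ-measurable function f belongs to L^∞(X) (i.e. is essentially bounded) if and only if there exists M ≥ 0 such that ∫_{{x ∈ B : |f(x)| > λ}} |f| dμ ≤ (λ + M) · μ({x ∈ B : |f(x)| > λ}) for all balls B ⊂ X and all λ ≥ 0. -/
open MeasureTheory Metric Set ENNReal NNReal

theorem aux_sc {X : Type*} [MetricSpace X] [MeasurableSpace X] [BorelSpace X]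
    (μ : Measure X)
    (hball : ∀ (x : X) (r : ℝ), 0 < r → 0 < μ (ball x r) ∧ μ (ball x r) < ⊤) :
    SecondCountableTopology X := by
  rcases isEmpty_or_nonempty X with h | ⟨⟨x0⟩⟩
  · infer_instance
  have hsf : SigmaFinite μ := by
    refine ⟨⟨⟨fun n : ℕ => ball x0 (n + 1), fun _ => trivial,
      fun n => (hball x0 _ (by positivity)).2, ?_⟩⟩⟩
    refine eq_univ_of_forall fun y => mem_iUnion.2 ?_
    obtain ⟨n, hn⟩ := exists_nat_gt (dist y x0)
    exact ⟨n, by rw [mem_ball]; linarith⟩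
  refine secondCountable_of_almost_dense_set fun ε hε => ?_
  obtain ⟨u, -, hu, hcov⟩ := Vitali.exists_disjoint_subfamily_covering_enlargement_closedBall
    (univ : Set X) (fun x => x) (fun _ => ε / 5) (ε / 5) (fun _ _ => le_rfl) 5 (by norm_num)
  refine ⟨u, ?_, fun x => ?_⟩
  · have := Measure.countable_meas_pos_of_disjoint_iUnion (μ := μ)
      (As := fun i : u => closedBall (i : X) (ε / 5)) (fun i => measurableSet_closedBall)
      (fun i j hij => hu i.2 j.2 (fun h => hij (Subtype.ext h)))
    have h2 : {i : u | 0 < μ (closedBall (i : X) (ε / 5))} = univ :=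
      eq_univ_of_forall fun i =>
        lt_of_lt_of_le (hball i (ε / 5) (by positivity)).1 (measure_mono ball_subset_closedBall)
    rw [h2] at this
    exact countable_coe_iff.1 (countable_univ_iff.1 this)
  · obtain ⟨b, hb, hsub⟩ := hcov x (mem_univ x)
    refine ⟨b, hb, ?_⟩
    have := hsub (mem_closedBall_self (by positivity))
    rw [mem_closedBall] at this
    linarith

/-- in a doubling metric measure space, a measurable `f` is essentially bounded
iff there is `M ≥ 0` with `∫_{{x ∈ B : |f| > λ}} |f| dμ ≤ (λ + M) μ({x ∈ B : |f| > λ})`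
for all balls `B` and all `λ ≥ 0`. -/
theorem stmt12 {X : Type*} [MetricSpace X] [MeasurableSpace X] [BorelSpace X]
    (μ : Measure X)
    (hball : ∀ (x : X) (r : ℝ), 0 < r → 0 < μ (ball x r) ∧ μ (ball x r) < ⊤)
    (C : ℝ≥0) (hC : 1 ≤ C)
    (hdoub : ∀ (x : X) (r : ℝ), 0 < r → μ (ball x (2 * r)) ≤ (C : ℝ≥0∞) * μ (ball x r))
    (f : X → ℝ) (hf : Measurable f) :
    (∃ K : ℝ, ∀ᵐ x ∂μ, |f x| ≤ K) ↔
    (∃ M : ℝ, 0 ≤ M ∧ ∀ (x : X) (r : ℝ), 0 < r → ∀ l : ℝ, 0 ≤ l →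
      ∫⁻ y in {y | y ∈ ball x r ∧ l < |f y|}, ENNReal.ofReal |f y| ∂μ ≤
        ENNReal.ofReal (l + M) * μ {y | y ∈ ball x r ∧ l < |f y|}) := by
  constructor
  · rintro ⟨K, hK⟩
    refine ⟨max K 0, le_max_right _ _, fun x r hr l hl => ?_⟩
    rw [← setLIntegral_const]
    refine lintegral_mono_ae (ae_restrict_of_ae ?_)
    filter_upwards [hK] with y hy
    exact ENNReal.ofReal_le_ofReal (by linarith [le_max_left K 0])
  · rintro ⟨M, hM, h⟩
    have := aux_sc μ hball
    have : IsLocallyFiniteMeasure μ :=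
      ⟨fun x => ⟨ball x 1, ball_mem_nhds x one_pos, (hball x 1 one_pos).2⟩⟩
    have : IsUnifLocDoublingMeasure μ := by
      refine ⟨C * C, ?_⟩
      filter_upwards [self_mem_nhdsWithin] with ε hε x
      have hε : 0 < ε := hε
      calc μ (closedBall x (2 * ε)) ≤ μ (ball x (2 * (2 * ε))) :=
            measure_mono (closedBall_subset_ball (by linarith))
        _ ≤ C * μ (ball x (2 * ε)) := hdoub _ _ (by linarith)
        _ ≤ C * (C * μ (ball x ε)) := by gcongr; exact hdoub _ _ hε
        _ ≤ C * (C * μ (closedBall x ε)) := by gcongr; exact ball_subset_closedBall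
        _ = _ := by push_cast; ring
    refine ⟨M + 1, ?_⟩
    set A : Set X := {y | M + 1 < |f y|} with hA
    have hAm : MeasurableSet A := measurableSet_lt measurable_const hf.abs
    -- bound on open balls
    have h1 : ∀ (x : X) (r : ℝ), 0 < r →
        ENNReal.ofReal (M + 1) * μ (A ∩ ball x r) ≤ ENNReal.ofReal M * μ (ball x r) := by
      intro x r hr
      have h0 := h x r hr 0 le_rfl
      rw [zero_add] at h0
      calc ENNReal.ofReal (M + 1) * μ (A ∩ ball x r)
          = ∫⁻ _ in A ∩ ball x r, ENNReal.ofReal (M + 1) ∂μ := (setLIntegral_const _ _).symm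
        _ ≤ ∫⁻ y in A ∩ ball x r, ENNReal.ofReal |f y| ∂μ :=
            setLIntegral_mono' (hAm.inter measurableSet_ball)
              fun y hy => ENNReal.ofReal_le_ofReal (le_of_lt hy.1)
        _ ≤ ∫⁻ y in {y | y ∈ ball x r ∧ 0 < |f y|}, ENNReal.ofReal |f y| ∂μ := by
            refine lintegral_mono_set fun y hy => ⟨hy.2, ?_⟩
            have : M + 1 < |f y| := hy.1
            linarith
        _ ≤ _ := h0
        _ ≤ _ := by gcongr; exact fun y hy => hy.1
    have h2 : ∀ (x : X) (r : ℝ), 0 < r →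
        ENNReal.ofReal (M + 1) * μ (A ∩ closedBall x r)
          ≤ ENNReal.ofReal M * μ (closedBall x r) := by
      intro x r hr
      have ht := tendsto_measure_biInter_gt (μ := μ) (s := fun r => ball x r) (a := r)
        (fun _ _ => measurableSet_ball.nullMeasurableSet) (fun _ _ _ hij => ball_subset_ball hij)
        ⟨r + 1, by simp, (hball x _ (by linarith)).2.ne⟩
      have he : (⋂ r' > r, ball x r') = closedBall x r := by
        ext y
        simp only [mem_iInter, mem_ball, mem_closedBall]
        exact ⟨fun H => le_of_forall_gt H, fun H r' hr' => lt_of_le_of_lt H hr'⟩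
      rw [he] at ht
      refine ge_of_tendsto (ENNReal.Tendsto.const_mul ht (Or.inr ENNReal.ofReal_ne_top)) ?_
      filter_upwards [self_mem_nhdsWithin] with r' hr'
      have hr' : r < r' := hr'
      refine le_trans ?_ (h1 x r' (hr.trans hr'))
      gcongr
      exact closedBall_subset_ball hr'
    have hd := (ae_restrict_iff' hAm).1 (IsUnifLocDoublingMeasure.ae_tendsto_measure_inter_div μ A 1)
    filter_upwards [hd] with x hx
    by_contra hcon
    have hxA : x ∈ A := not_le.1 hcon
    have ht := hx hxA (l := nhdsWithin (0 : ℝ) (Ioi 0)) (fun _ => x) (fun r => r) Filter.tendsto_id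
      (by
        filter_upwards [self_mem_nhdsWithin] with r hr
        have hr : 0 < r := hr
        exact mem_closedBall_self (by linarith))
    have ht2 := ENNReal.Tendsto.const_mul (a := ENNReal.ofReal (M + 1)) ht
      (Or.inr ENNReal.ofReal_ne_top)
    rw [mul_one] at ht2
    have hle : ENNReal.ofReal (M + 1) ≤ ENNReal.ofReal M := by
      refine le_of_tendsto ht2 ?_
      filter_upwards [self_mem_nhdsWithin] with r hr
      rw [← mul_div_assoc]
      exact ENNReal.div_le_of_le_mul (h2 x r hr)
    rw [ENNReal.ofReal_le_ofReal_iff hM] at hle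
    linarith
end

section
/- Let (X,d,μ) be a doubling metric measure space, B₀ = B(x₀, r₀) a ball, F ⊂ 3B₀ a measurable set, and E = F ∩ B₀. If μ(F) ≤ (1/2)·μ(B₀), then there exists a countable pairwise disjoint family of balls {B_i} contained in 3B₀ such that (i) μ(5B_i ∩ F) ≤ μ(5B_i \ F) for every i, (ii) μ(E \ ⋃_{i=1}^∞ 5B_i) = 0, and (iii) ∑_{i=1}^∞ μ(5B_i) ≤ c · μ(F), where c depends only on the doubling constant of μ (one may take c = 2 c_μ³). -/
open MeasureTheory Metric Set ENNReal NNReal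

theorem stmt13_aux_sc {X : Type*} [MetricSpace X] [MeasurableSpace X] [BorelSpace X]
    (μ : Measure X)
    (hball : ∀ (x : X) (r : ℝ), 0 < r → 0 < μ (ball x r) ∧ μ (ball x r) < ⊤) (x₀ : X) :
    SigmaFinite μ ∧ SecondCountableTopology X := by
  have hs : SigmaFinite μ := by
    refine ⟨⟨⟨fun n : ℕ => ball x₀ (n + 1), fun _ => trivial,
      fun n => (hball x₀ _ (by positivity)).2, ?_⟩⟩⟩
    refine eq_univ_of_forall fun x => ?_
    obtain ⟨n, hn⟩ := exists_nat_gt (dist x x₀)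
    exact mem_iUnion.2 ⟨n, by simp only [mem_ball]; linarith⟩
  refine ⟨hs, Metric.secondCountable_of_almost_dense_set fun ε hε => ?_⟩
  obtain ⟨u, -, hd, hc⟩ := Vitali.exists_disjoint_subfamily_covering_enlargement_ball
    (univ : Set X) id (fun _ => ε / 5) (ε / 5) (fun _ _ => le_rfl) 5 (by norm_num)
  refine ⟨u, ?_, fun x => ?_⟩
  · have h := Measure.countable_meas_pos_of_disjoint_iUnion (μ := μ)
      (As := fun y : u => ball (y : X) (ε / 5)) (fun _ => measurableSet_ball)
      (fun a b hab => hd a.2 b.2 (fun h => hab (Subtype.ext h)))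
    have : {i : u | 0 < μ (ball (i : X) (ε / 5))} = univ :=
      eq_univ_of_forall fun i => (hball _ _ (by positivity)).1
    rw [this] at h
    exact countable_coe_iff.1 (countable_univ_iff.1 h)
  · obtain ⟨y, hy, hxy⟩ := hc x (mem_univ _)
    refine ⟨y, hy, ?_⟩
    have := hxy (mem_ball_self (by positivity))
    simp only [id, mem_ball] at this
    linarith

theorem stmt13_aux_density {X : Type*} [MetricSpace X] [MeasurableSpace X] [BorelSpace X]
    (μ : Measure X)
    (hball : ∀ (x : X) (r : ℝ), 0 < r → 0 < μ (ball x r) ∧ μ (ball x r) < ⊤)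
    (C : ℝ≥0)
    (hdoub : ∀ (x : X) (r : ℝ), 0 < r → μ (ball x (2 * r)) ≤ (C : ℝ≥0∞) * μ (ball x r))
    (x₀ : X) (F : Set X) :
    ∀ᵐ x ∂(μ.restrict F), ∃ ρ : ℝ, 0 < ρ ∧ μ (ball x ρ) < 2 * μ (ball x ρ ∩ F) := by
  obtain ⟨_, _⟩ := stmt13_aux_sc μ hball x₀
  have : IsLocallyFiniteMeasure μ :=
    ⟨fun x => ⟨ball x 1, ball_mem_nhds x one_pos, (hball x 1 one_pos).2⟩⟩
  have : IsUnifLocDoublingMeasure μ := by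
    refine ⟨⟨C * C, ?_⟩⟩
    filter_upwards [self_mem_nhdsWithin] with ε hε x
    have hε : 0 < ε := hε
    calc μ (closedBall x (2 * ε)) ≤ μ (ball x (2 * (2 * ε))) :=
          measure_mono (closedBall_subset_ball (by linarith))
      _ ≤ C * (C * μ (ball x ε)) := (hdoub x _ (by linarith)).trans
          (mul_le_mul_right (hdoub x ε hε) _)
      _ ≤ C * (C * μ (closedBall x ε)) := by gcongr; exact ball_subset_closedBall
      _ = _ := by rw [ENNReal.coe_mul, mul_assoc]
  filter_upwards [IsUnifLocDoublingMeasure.ae_tendsto_measure_inter_div μ F 1] with x hx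
  have h1 := hx (l := nhdsWithin (0 : ℝ) (Ioi 0)) (fun _ => x) id Filter.tendsto_id (by
    filter_upwards [self_mem_nhdsWithin] with ε hε
    have hε : 0 < ε := hε
    simp [hε.le])
  have h2 : ∀ᶠ ε in nhdsWithin (0 : ℝ) (Ioi 0),
      2⁻¹ < μ (F ∩ closedBall x (id ε)) / μ (closedBall x (id ε)) :=
    h1.eventually_const_lt (by simp)
  obtain ⟨ε, hlt, hε⟩ := (h2.and self_mem_nhdsWithin).exists
  have hε : 0 < ε := hε
  simp only [id] at hlt
  have hpos : μ (closedBall x ε) ≠ 0 :=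
    ((hball x ε hε).1.trans_le (measure_mono ball_subset_closedBall)).ne'
  have hfin : μ (closedBall x ε) ≠ ⊤ :=
    ((measure_mono (closedBall_subset_ball (by linarith))).trans_lt
      (hball x (2 * ε) (by linarith)).2).ne
  have h3 : μ (closedBall x ε) < 2 * μ (F ∩ closedBall x ε) := by
    rw [ENNReal.lt_div_iff_mul_lt (Or.inl hpos) (Or.inl hfin), mul_comm,
      ← div_eq_mul_inv] at hlt
    rw [ENNReal.div_lt_iff (by simp) (by simp)] at hlt
    rwa [mul_comm]
  have h4 : Filter.Tendsto (fun r => μ (ball x r)) (nhdsWithin ε (Ioi ε))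
      (nhds (μ (⋂ r > ε, ball x r))) := by
    refine tendsto_measure_biInter_gt (fun r _ => measurableSet_ball.nullMeasurableSet)
      (fun i j _ hij => ball_subset_ball hij) ⟨ε + 1, by linarith, ?_⟩
    exact (hball x _ (by linarith)).2.ne
  have h5 : ⋂ r > ε, ball x r = closedBall x ε := by
    ext y
    simp only [mem_iInter, mem_ball, mem_closedBall]
    exact ⟨fun h => le_of_forall_gt_imp_ge_of_dense fun a ha => (h a ha).le,
      fun h a ha => h.trans_lt ha⟩
  rw [h5] at h4
  obtain ⟨ρ, hρ, hερ⟩ := ((h4.eventually_lt_const h3).and self_mem_nhdsWithin).exists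
  have hερ : ε < ρ := hερ
  refine ⟨ρ, hε.trans hερ, hρ.trans_le ?_⟩
  rw [inter_comm]
  exact mul_le_mul_right (measure_mono
    (inter_subset_inter_left _ (closedBall_subset_ball hερ))) _

/-- Calderón–Zygmund type covering lemma in a doubling metric measure space.
If `F ⊆ 3B₀` is measurable with `μ F ≤ μ(B₀)/2`, there is a countable pairwise disjoint
family of balls `Bᵢ ⊆ 3B₀` with `μ(5Bᵢ ∩ F) ≤ μ(5Bᵢ \ F)`, covering `E = F ∩ B₀` up to a
null set by the `5Bᵢ`, and with `∑ μ(5Bᵢ) ≤ 2 c_μ³ μ(F)`. -/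
theorem stmt13 {X : Type*} [MetricSpace X] [MeasurableSpace X] [BorelSpace X]
    (μ : Measure X)
    (hball : ∀ (x : X) (r : ℝ), 0 < r → 0 < μ (ball x r) ∧ μ (ball x r) < ⊤)
    (C : ℝ≥0) (hC : 1 ≤ C)
    (hdoub : ∀ (x : X) (r : ℝ), 0 < r → μ (ball x (2 * r)) ≤ (C : ℝ≥0∞) * μ (ball x r))
    (x₀ : X) (r₀ : ℝ) (hr₀ : 0 < r₀)
    (F : Set X) (hFmeas : MeasurableSet F) (hF3 : F ⊆ ball x₀ (3 * r₀))
    (hFsmall : μ F ≤ μ (ball x₀ r₀) / 2) :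
    ∃ (c : ℕ → X) (r : ℕ → ℝ),
      (∀ i, 0 ≤ r i) ∧
      (∀ i, ball (c i) (r i) ⊆ ball x₀ (3 * r₀)) ∧
      (Pairwise fun i j => Disjoint (ball (c i) (r i)) (ball (c j) (r j))) ∧
      (∀ i, μ (ball (c i) (5 * r i) ∩ F) ≤ μ (ball (c i) (5 * r i) \ F)) ∧
      μ ((F ∩ ball x₀ r₀) \ ⋃ i, ball (c i) (5 * r i)) = 0 ∧
      ∑' i, μ (ball (c i) (5 * r i)) ≤ 2 * (C : ℝ≥0∞) ^ 3 * μ F := by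
  classical
  obtain ⟨_, _⟩ := stmt13_aux_sc μ hball x₀
  -- large balls are good
  have hgood : ∀ x ∈ ball x₀ r₀, ∀ ρ, 2 * r₀ ≤ ρ → 2 * μ (ball x ρ ∩ F) ≤ μ (ball x ρ) := by
    intro x hx ρ hρ
    have hsub : ball x₀ r₀ ⊆ ball x ρ := by
      apply ball_subset_ball'
      rw [mem_ball, dist_comm] at hx
      linarith
    calc 2 * μ (ball x ρ ∩ F) ≤ 2 * (μ (ball x₀ r₀) / 2) := by
          gcongr
          exact (measure_mono inter_subset_right).trans hFsmall
      _ = μ (ball x₀ r₀) := ENNReal.mul_div_cancel (by simp) (by simp)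
      _ ≤ _ := measure_mono hsub
  let t : Set X := {x | x ∈ F ∩ ball x₀ r₀ ∧
    ∃ ρ : ℝ, 0 < ρ ∧ μ (ball x ρ) < 2 * μ (ball x ρ ∩ F)}
  have hnull : μ ((F ∩ ball x₀ r₀) \ t) = 0 := by
    have h := stmt13_aux_density μ hball C hdoub x₀ F
    rw [ae_restrict_iff' hFmeas, ae_iff] at h
    refine measure_mono_null ?_ h
    rintro x ⟨hx, hxt⟩
    simp only [mem_ofPred_eq]
    intro hcon
    exact hxt ⟨hx, hcon hx.1⟩
  have hrad : ∀ x : X, ∃ ρ : ℝ, x ∈ t → 0 < ρ ∧ ρ < 2 * r₀ ∧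
      μ (ball x ρ) < 2 * μ (ball x ρ ∩ F) ∧
      2 * μ (ball x (5 * ρ) ∩ F) ≤ μ (ball x (5 * ρ)) := by
    intro x
    by_cases hx : x ∈ t
    swap
    · exact ⟨0, fun h => absurd h hx⟩
    obtain ⟨hxE, ρ, hρ, hbad⟩ := hx
    have hex : ∃ n : ℕ, 2 * μ (ball x (5 ^ n * ρ) ∩ F) ≤ μ (ball x (5 ^ n * ρ)) := by
      obtain ⟨n, hn⟩ := pow_unbounded_of_one_lt (2 * r₀ / ρ) (by norm_num : (1 : ℝ) < 5)
      exact ⟨n, hgood x hxE.2 _ ((div_lt_iff₀ hρ).1 hn).le⟩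
    have hspec := Nat.find_spec hex
    have hmin := fun m => Nat.find_min hex (m := m)
    generalize Nat.find hex = n at hspec hmin
    cases n with
    | zero => simp only [pow_zero, one_mul] at hspec; exact absurd hbad hspec.not_gt
    | succ m =>
      have hm := not_le.1 (hmin m (Nat.lt_succ_self m))
      refine ⟨5 ^ m * ρ, fun _ => ⟨by positivity, ?_, hm, ?_⟩⟩
      · by_contra! h
        exact (hgood x hxE.2 _ h).not_gt hm
      · rwa [← mul_assoc, ← pow_succ']
  choose ρ hρ using hrad
  obtain ⟨u, hut, hd, hc⟩ := Vitali.exists_disjoint_subfamily_covering_enlargement_ball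
    t id ρ (2 * r₀) (fun x hx => (hρ x hx).2.1.le) 5 (by norm_num)
  have hucount : u.Countable := by
    have h := Measure.countable_meas_pos_of_disjoint_iUnion (μ := μ)
      (As := fun y : u => ball (y : X) (ρ y)) (fun _ => measurableSet_ball)
      (fun a b hab => hd a.2 b.2 (fun h => hab (Subtype.ext h)))
    have : {i : u | 0 < μ (ball (i : X) (ρ i))} = univ :=
      eq_univ_of_forall fun i => (hball _ _ (hρ _ (hut i.2)).1).1
    rw [this] at h
    exact countable_coe_iff.1 (countable_univ_iff.1 h)
  have := hucount.to_subtype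
  obtain ⟨f, hf⟩ := exists_injective_nat u
  let c : ℕ → X := Function.extend f (fun y => (y : X)) (fun _ => x₀)
  let r : ℕ → ℝ := Function.extend f (fun y => ρ (y : X)) (fun _ => 0)
  have hcf : ∀ y : u, c (f y) = y := fun y => hf.extend_apply _ _ _
  have hrf : ∀ y : u, r (f y) = ρ y := fun y => hf.extend_apply _ _ _
  have hcase : ∀ n, r n = 0 ∨ ∃ y : u, f y = n := by
    intro n
    by_cases h : ∃ y, f y = n
    · exact Or.inr h
    · exact Or.inl (Function.extend_apply' _ _ _ h)
  have hdisj : Pairwise fun i j => Disjoint (ball (c i) (r i)) (ball (c j) (r j)) := by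
    intro i j hij
    rcases hcase i with h | ⟨y, rfl⟩
    · simp [h]
    rcases hcase j with h | ⟨z, rfl⟩
    · simp [h]
    rw [hcf, hrf, hcf, hrf]
    exact hd y.2 z.2 (fun h => hij (congrArg f (Subtype.ext h)))
  refine ⟨c, r, ?_, ?_, hdisj, ?_, ?_, ?_⟩
  · intro i
    rcases hcase i with h | ⟨y, rfl⟩
    · simp [h]
    · rw [hrf]; exact (hρ _ (hut y.2)).1.le
  · intro i
    rcases hcase i with h | ⟨y, rfl⟩
    · simp [h]
    · rw [hrf, hcf]
      have h1 := (hut y.2).1.2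
      have h2 := (hρ _ (hut y.2)).2.1
      rw [mem_ball] at h1
      exact ball_subset_ball' (by linarith)
  · intro i
    rcases hcase i with h | ⟨y, rfl⟩
    · simp [h]
    · rw [hrf, hcf]
      have h1 := (hρ _ (hut y.2)).2.2.2
      have h2 := (hρ _ (hut y.2)).1
      rw [← measure_inter_add_diff (ball (y : X) (5 * ρ y)) hFmeas, two_mul] at h1
      refine (ENNReal.add_le_add_iff_left ?_).1 h1
      exact ((measure_mono inter_subset_left).trans_lt (hball _ _ (by linarith)).2).ne
  · refine measure_mono_null (diff_subset_diff_right ?_) hnull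
    intro x hx
    obtain ⟨y, hy, hxy⟩ := hc x hx
    refine mem_iUnion.2 ⟨f ⟨y, hy⟩, ?_⟩
    rw [hrf, hcf]
    exact hxy (mem_ball_self (hρ x hx).1)
  · have hterm : ∀ i, μ (ball (c i) (5 * r i)) ≤
        2 * (C : ℝ≥0∞) ^ 3 * μ (ball (c i) (r i) ∩ F) := by
      intro i
      rcases hcase i with h | ⟨y, rfl⟩
      · simp [h]
      rw [hrf, hcf]
      obtain ⟨h1, -, h2, -⟩ := hρ _ (hut y.2)
      calc μ (ball (y : X) (5 * ρ y)) ≤ μ (ball (y : X) (2 * (2 * (2 * ρ y)))) :=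
            measure_mono (ball_subset_ball (by linarith))
        _ ≤ C * (C * (C * μ (ball (y : X) (ρ y)))) := by
            refine (hdoub _ _ (by linarith)).trans ?_
            gcongr
            refine (hdoub _ _ (by linarith)).trans ?_
            gcongr
            exact hdoub _ _ h1
        _ ≤ C * (C * (C * (2 * μ (ball (y : X) (ρ y) ∩ F)))) := by gcongr
        _ = _ := by ring
    calc ∑' i, μ (ball (c i) (5 * r i))
        ≤ ∑' i, 2 * (C : ℝ≥0∞) ^ 3 * μ (ball (c i) (r i) ∩ F) := ENNReal.tsum_le_tsum hterm
      _ = 2 * (C : ℝ≥0∞) ^ 3 * ∑' i, μ (ball (c i) (r i) ∩ F) := ENNReal.tsum_mul_left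
      _ ≤ _ := by
        gcongr
        rw [← measure_iUnion (fun i j hij => (hdisj hij).mono inter_subset_left
          inter_subset_left) (fun i => measurableSet_ball.inter hFmeas)]
        exact measure_mono (iUnion_subset fun i => inter_subset_right)
end

section
/- Let (X,d,μ) be a doubling metric measure space and let f ∈ BMO(X). Suppose there exists α ≥ 0 such that the distribution function d_{f,μ}(λ) = μ({x ∈ X : |f(x)| > λ}) is finite for all λ > α. Then there exists M ≥ 0 such that ∫_{{x ∈ X : |f(x)| > λ}} |f| dμ ≤ (λ + M) · μ({x ∈ X : |f(x)| > λ}) for all λ > α; in particular f belongs to weak L^∞(X). -/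
open MeasureTheory Metric Set ENNReal NNReal

open Filter Topology in
lemma aux_ball_est {X : Type*} [MetricSpace X] [MeasurableSpace X] [BorelSpace X]
    (μ : Measure X) (f : X → ℝ) (hf : Measurable f) (B : Set X) (hB : MeasurableSet B)
    (hpos : 0 < μ B) (hfin : μ B < ⊤) (hint : IntegrableOn f B μ) (K : ℝ)
    (hBMO : (⨍ y in B, |f y - meanOn μ f B| ∂μ) ≤ K) (l : ℝ)
    (hE : 2 * μ ({x | l < |f x|} ∩ B) ≤ μ B) :
    ∫⁻ x in B, ENNReal.ofReal (|f x| - l) ∂μ ≤ 3 * ENNReal.ofReal K * μ B := by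
  set c := meanOn μ f B with hc
  have hEm : MeasurableSet {x | l < |f x|} := measurableSet_lt measurable_const (by fun_prop)
  have hmpos : 0 < μ.real B := ENNReal.toReal_pos hpos.ne' hfin.ne
  have hJ : ∫⁻ x in B, ENNReal.ofReal |f x - c| ∂μ ≤ ENNReal.ofReal K * μ B := by
    have hi : IntegrableOn (fun x => |f x - c|) B μ :=
      (hint.sub (integrableOn_const hfin.ne)).abs
    rw [← ofReal_integral_eq_lintegral_ofReal hi (ae_of_all _ fun x => abs_nonneg _)]
    rw [setAverage_eq, smul_eq_mul, inv_mul_le_iff₀ hmpos] at hBMO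
    refine (ENNReal.ofReal_le_ofReal hBMO).trans ?_
    rw [ENNReal.ofReal_mul hmpos.le, mul_comm, Measure.real, ENNReal.ofReal_toReal hfin.ne]
  have hsplit : μ ({x | l < |f x|} ∩ B) + μ (B \ {x | l < |f x|}) = μ B := by
    rw [inter_comm]; exact measure_inter_add_sdiff B hEm
  have hfinE : μ ({x | l < |f x|} ∩ B) ≠ ⊤ := ((measure_mono inter_subset_right).trans_lt hfin).ne
  have hle : μ ({x | l < |f x|} ∩ B) ≤ μ (B \ {x | l < |f x|}) := by
    rw [← hsplit, two_mul] at hE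
    exact (ENNReal.add_le_add_iff_left hfinE).1 hE
  have hD : μ B ≤ 2 * μ (B \ {x | l < |f x|}) := by
    rw [← hsplit, two_mul]; gcongr
  have ha : ENNReal.ofReal (|c| - l) * μ (B \ {x | l < |f x|}) ≤ ENNReal.ofReal K * μ B := by
    refine le_trans ?_ hJ
    rw [← setLIntegral_const]
    refine le_trans ?_ (lintegral_mono_set (sdiff_subset (t := {x | l < |f x|})))
    refine setLIntegral_mono (by fun_prop) fun x hx => ENNReal.ofReal_le_ofReal ?_
    have h1 : |f x| ≤ l := not_lt.1 hx.2
    have h2 := abs_sub_abs_le_abs_sub c (f x)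
    rw [abs_sub_comm] at h2
    linarith
  calc ∫⁻ x in B, ENNReal.ofReal (|f x| - l) ∂μ
      ≤ ∫⁻ x in B, (ENNReal.ofReal (|c| - l) + ENNReal.ofReal |f x - c|) ∂μ := by
        refine lintegral_mono fun x => ?_
        refine le_trans (ENNReal.ofReal_le_ofReal ?_) ENNReal.ofReal_add_le
        have h2 := abs_sub_abs_le_abs_sub (f x) c
        linarith
    _ = ENNReal.ofReal (|c| - l) * μ B + ∫⁻ x in B, ENNReal.ofReal |f x - c| ∂μ := by
        rw [lintegral_add_left measurable_const, setLIntegral_const]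
    _ ≤ 2 * (ENNReal.ofReal K * μ B) + ENNReal.ofReal K * μ B := by
        refine add_le_add ?_ hJ
        calc _ ≤ ENNReal.ofReal (|c| - l) * (2 * μ (B \ {x | l < |f x|})) := by gcongr
          _ = 2 * (ENNReal.ofReal (|c| - l) * μ (B \ {x | l < |f x|})) := by ring
          _ ≤ _ := by gcongr
    _ = _ := by ring

lemma aux_sigmaFinite {X : Type*} [MetricSpace X] [MeasurableSpace X]
    (μ : Measure X)
    (hball : ∀ (x : X) (r : ℝ), 0 < r → 0 < μ (ball x r) ∧ μ (ball x r) < ⊤) (x0 : X) :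
    SigmaFinite μ := by
  refine ⟨⟨⟨fun n => ball x0 (n + 1), fun _ => trivial, fun n => (hball x0 _ (by positivity)).2, ?_⟩⟩⟩
  refine eq_univ_of_forall fun x => mem_iUnion.2 ?_
  obtain ⟨n, hn⟩ := exists_nat_gt (dist x x0)
  exact ⟨n, mem_ball.2 (by linarith)⟩

lemma aux_secondCountable {X : Type*} [MetricSpace X] [MeasurableSpace X] [BorelSpace X]
    (μ : Measure X)
    (hball : ∀ (x : X) (r : ℝ), 0 < r → 0 < μ (ball x r) ∧ μ (ball x r) < ⊤) (x0 : X) :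
    SecondCountableTopology X := by
  have := aux_sigmaFinite μ hball x0
  refine Metric.secondCountable_of_almost_dense_set fun ε hε => ?_
  obtain ⟨u, -, hu, hcov⟩ := Vitali.exists_disjoint_subfamily_covering_enlargement_closedBall
    (univ : Set X) id (fun _ => ε / 5) (ε / 5) (fun _ _ => le_rfl) 5 (by norm_num)
  refine ⟨u, ?_, fun x => ?_⟩
  · have h := Measure.countable_meas_pos_of_disjoint_iUnion (μ := μ)
      (As := fun i : u => closedBall (i : X) (ε / 5)) (fun i => isClosed_closedBall.measurableSet)
      (fun i j hij => hu i.2 j.2 (fun h => hij (Subtype.ext h)))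
    have h2 : {i : u | 0 < μ (closedBall (i : X) (ε / 5))} = univ :=
      eq_univ_of_forall fun i => (hball i (ε / 5) (by positivity)).1.trans_le
        (measure_mono ball_subset_closedBall)
    rw [h2] at h
    exact countable_coe_iff.1 (countable_univ_iff.1 h)
  · obtain ⟨b, hb, hsub⟩ := hcov x (mem_univ x)
    refine ⟨b, hb, ?_⟩
    have := hsub (mem_closedBall_self (by positivity))
    rw [mem_closedBall] at this
    simp only [id] at this
    linarith

open Filter Topology in
lemma aux_doubling {X : Type*} [MetricSpace X] [MeasurableSpace X]
    (μ : Measure X) (C : ℝ≥0)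
    (hdoub : ∀ (x : X) (r : ℝ), 0 < r → μ (ball x (2 * r)) ≤ (C : ℝ≥0∞) * μ (ball x r)) :
    IsUnifLocDoublingMeasure μ := by
  refine ⟨⟨C * C, ?_⟩⟩
  filter_upwards [self_mem_nhdsWithin] with ε hε x
  have hε' : 0 < ε := hε
  calc μ (closedBall x (2 * ε)) ≤ μ (ball x (2 * (2 * ε))) :=
        measure_mono (closedBall_subset_ball (by linarith))
    _ ≤ C * (C * μ (ball x ε)) := (hdoub _ _ (by linarith)).trans (by gcongr; exact hdoub _ _ hε')
    _ ≤ C * (C * μ (closedBall x ε)) := by gcongr; exact ball_subset_closedBall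
    _ = _ := by push_cast; ring

lemma aux_ball_tendsto {X : Type*} [MetricSpace X] [MeasurableSpace X]
    (μ : Measure X) (x0 : X) (a : ℝ≥0∞) (ha : a < μ univ) : ∃ R : ℝ, 0 < R ∧ a < μ (ball x0 R) := by
  have hU : (⋃ n : ℕ, ball x0 ((n : ℝ) + 1)) = univ := by
    refine eq_univ_of_forall fun x => mem_iUnion.2 ?_
    obtain ⟨n, hn⟩ := exists_nat_gt (dist x x0)
    exact ⟨n, mem_ball.2 (by linarith)⟩
  have hm : Monotone (fun n : ℕ => ball x0 ((n : ℝ) + 1)) := by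
    intro i j hij
    exact ball_subset_ball (by gcongr)
  rw [← hU, hm.measure_iUnion, lt_iSup_iff] at ha
  obtain ⟨n, hn⟩ := ha
  exact ⟨n + 1, by positivity, hn⟩

/-- a doubling space of finite measure is a ball -/
lemma aux_bounded {X : Type*} [MetricSpace X] [MeasurableSpace X] [BorelSpace X]
    (μ : Measure X)
    (hball : ∀ (x : X) (r : ℝ), 0 < r → 0 < μ (ball x r) ∧ μ (ball x r) < ⊤)
    (C : ℝ≥0)
    (hdoub : ∀ (x : X) (r : ℝ), 0 < r → μ (ball x (2 * r)) ≤ (C : ℝ≥0∞) * μ (ball x r))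
    (x0 : X) (hfin : μ univ < ⊤) : ∃ R : ℝ, 0 < R ∧ ball x0 R = univ := by
  by_contra hcon
  push Not at hcon
  have key : ∀ R : ℝ, 0 < R → C * C * μ (ball x0 R) + μ (ball x0 R) ≤ C * C * μ univ := by
    intro R hR
    obtain ⟨x, hx⟩ := (ne_univ_iff_exists_notMem _).1 (hcon (2 * R) (by linarith))
    rw [mem_ball, not_lt] at hx
    have hd : Disjoint (ball x0 R) (ball x (dist x x0 / 2)) :=
      ball_disjoint_ball (by rw [dist_comm x0 x]; linarith)
    have h1 : μ (ball x0 R) + μ (ball x (dist x x0 / 2)) ≤ μ univ := by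
      rw [← measure_union hd measurableSet_ball]; exact measure_mono (subset_univ _)
    have h2 : μ (ball x0 R) ≤ C * C * μ (ball x (dist x x0 / 2)) := by
      calc μ (ball x0 R) ≤ μ (ball x (2 * (2 * (dist x x0 / 2)))) := by
            refine measure_mono (ball_subset_ball' ?_)
            rw [dist_comm x0 x]; linarith
        _ ≤ C * (C * μ (ball x (dist x x0 / 2))) :=
          (hdoub _ _ (by linarith)).trans (by gcongr; exact hdoub _ _ (by linarith))
        _ = _ := by ring
    calc C * C * μ (ball x0 R) + μ (ball x0 R)
        ≤ C * C * μ (ball x0 R) + C * C * μ (ball x (dist x x0 / 2)) := by gcongr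
      _ = C * C * (μ (ball x0 R) + μ (ball x (dist x x0 / 2))) := by ring
      _ ≤ _ := by gcongr
  have key2 : C * C * μ univ + μ univ ≤ C * C * μ univ := by
    have hlim : Filter.Tendsto (fun n : ℕ => μ (ball x0 ((n : ℝ) + 1))) Filter.atTop
        (nhds (μ univ)) := by
      have hU : (⋃ n : ℕ, ball x0 ((n : ℝ) + 1)) = univ := by
        refine eq_univ_of_forall fun x => mem_iUnion.2 ?_
        obtain ⟨n, hn⟩ := exists_nat_gt (dist x x0)
        exact ⟨n, mem_ball.2 (by linarith)⟩
      rw [← hU]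
      refine tendsto_measure_iUnion_atTop ?_
      intro i j hij
      exact ball_subset_ball (by gcongr)
    refine le_of_tendsto' (Filter.Tendsto.add (ENNReal.Tendsto.const_mul hlim (Or.inr ?_)) hlim)
      (fun n => key _ (by positivity))
    exact ENNReal.mul_ne_top coe_ne_top coe_ne_top
  have hne : C * C * μ univ ≠ ⊤ :=
    ENNReal.mul_ne_top (ENNReal.mul_ne_top coe_ne_top coe_ne_top) hfin.ne
  have h0 : μ univ ≤ 0 := (ENNReal.add_le_add_iff_left hne).1 (by simpa using key2)
  have := (hball x0 1 one_pos).1.trans_le ((measure_mono (subset_univ _)).trans h0)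
  exact lt_irrefl _ this

open Filter Topology in
lemma aux_core {X : Type*} [MetricSpace X] [MeasurableSpace X] [BorelSpace X]
    (μ : Measure X)
    (hball : ∀ (x : X) (r : ℝ), 0 < r → 0 < μ (ball x r) ∧ μ (ball x r) < ⊤)
    (C : ℝ≥0) (hC : 1 ≤ C)
    (hdoub : ∀ (x : X) (r : ℝ), 0 < r → μ (ball x (2 * r)) ≤ (C : ℝ≥0∞) * μ (ball x r))
    (f : X → ℝ) (hf : Measurable f)
    (hloc : ∀ (x : X) (r : ℝ), 0 < r → IntegrableOn f (ball x r) μ)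
    (K : ℝ)
    (hBMO : ∀ (x : X) (r : ℝ), 0 < r →
      (⨍ y in ball x r, |f y - meanOn μ f (ball x r)| ∂μ) ≤ K)
    (x0 : X) (l : ℝ) (hlarge : 2 * C * μ {x | l < |f x|} < μ univ) :
    ∫⁻ x in {x | l < |f x|}, ENNReal.ofReal (|f x| - l) ∂μ ≤
      (3 * ENNReal.ofReal K * (C * (C * C)) * (2 * C)) * μ {x | l < |f x|} := by
  have := aux_sigmaFinite μ hball x0
  have := aux_secondCountable μ hball x0
  have := aux_doubling μ C hdoub
  have hlf : IsLocallyFiniteMeasure μ :=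
    ⟨fun x => ⟨ball x 1, ball_mem_nhds x one_pos, (hball x 1 one_pos).2⟩⟩
  set E : Set X := {x | l < |f x|} with hEdef
  have hEm : MeasurableSet E := measurableSet_lt measurable_const (by fun_prop)
  set A : ℝ≥0∞ := 3 * ENNReal.ofReal K * (C * (C * C)) * (2 * C) with hA
  obtain ⟨R, hR, hRE⟩ := aux_ball_tendsto μ x0 _ hlarge
  let S : X → Set ℝ := fun x => {r | 0 < r ∧ μ (closedBall x r) < 2 * C * μ (E ∩ closedBall x r)}
  have hSbd : ∀ x, ∀ r ∈ S x, r ≤ R + dist x x0 := by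
    rintro x r ⟨hr, hlt⟩
    by_contra! hcon
    have h1 : μ (ball x0 R) ≤ μ (closedBall x r) := by
      refine measure_mono ((ball_subset_ball' ?_).trans ball_subset_closedBall)
      rw [dist_comm]; exact hcon.le
    have h2 : 2 * C * μ (E ∩ closedBall x r) ≤ 2 * C * μ E := by gcongr; exact inter_subset_left
    exact lt_irrefl _ ((h1.trans_lt hlt).trans_le (h2.trans hRE.le))
  have hC1 : (1 : ℝ≥0∞) ≤ C := by exact_mod_cast hC
  have hdens : ∀ᵐ x ∂(μ.restrict E), (S x).Nonempty := by
    filter_upwards [IsUnifLocDoublingMeasure.ae_tendsto_measure_inter_div μ E 1] with x hx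
    have ht : Tendsto (fun n : ℕ => (1 : ℝ) / ((n : ℝ) + 1)) atTop (𝓝[>] 0) :=
      tendsto_nhdsWithin_iff.2 ⟨tendsto_one_div_add_atTop_nhds_zero_nat,
        Eventually.of_forall fun n => by simp only [mem_Ioi]; positivity⟩
    have h := hx (fun _ => x) _ ht
      (Eventually.of_forall fun n => mem_closedBall_self (by positivity))
    have h2 : (2 : ℝ≥0∞)⁻¹ < 1 := by simp
    obtain ⟨n, hn⟩ := (h.eventually (lt_mem_nhds h2)).exists
    refine ⟨1 / ((n : ℝ) + 1), by positivity, ?_⟩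
    set r : ℝ := 1 / ((n : ℝ) + 1)
    have hr : 0 < r := by positivity
    have hcpos : μ (closedBall x r) ≠ 0 :=
      ((hball x r hr).1.trans_le (measure_mono ball_subset_closedBall)).ne'
    have hcfin : μ (closedBall x r) ≠ ⊤ :=
      ((measure_mono (closedBall_subset_ball (by linarith : r < 2 * r))).trans_lt
        (hball x (2 * r) (by linarith)).2).ne
    have hn2 := (ENNReal.lt_div_iff_mul_lt (Or.inl hcpos) (Or.inl hcfin)).1 hn
    rw [mul_comm, ← div_eq_mul_inv, ENNReal.div_lt_iff (by simp) (by simp)] at hn2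
    refine hn2.trans_le ?_
    rw [mul_comm]
    gcongr
    exact le_mul_of_one_le_right' hC1
  have hchoose : ∀ x, ∃ r : ℝ, (S x).Nonempty → r ∈ S x ∧ ∀ s, 2 * r ≤ s → s ∉ S x := by
    intro x
    by_cases hne : (S x).Nonempty
    · have hbdd : BddAbove (S x) := ⟨_, fun r hr => hSbd x r hr⟩
      obtain ⟨r0, hr0⟩ := hne
      have hpos : 0 < sSup (S x) := hr0.1.trans_le (le_csSup hbdd hr0)
      obtain ⟨r, hr, hlt⟩ := exists_lt_of_lt_csSup ⟨r0, hr0⟩ (half_lt_self hpos)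
      refine ⟨r, fun _ => ⟨hr, fun s hs hmem => ?_⟩⟩
      have := le_csSup hbdd hmem
      linarith
    · exact ⟨0, fun h => absurd h hne⟩
  choose ρ hρ using hchoose
  -- local estimate
  have hloc2 : ∀ N : ℕ, ∫⁻ x in E ∩ ball x0 N, ENNReal.ofReal (|f x| - l) ∂μ ≤ A * μ E := by
    intro N
    let t : Set X := {x | x ∈ E ∩ ball x0 N ∧ (S x).Nonempty}
    obtain ⟨u, hut, hdisj, hcov⟩ :=
      Vitali.exists_disjoint_subfamily_covering_enlargement_closedBall t id ρ (R + N)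
        (fun x hx => by
          have h1 := hSbd x _ (hρ x hx.2).1
          have h2 : dist x x0 < N := hx.1.2
          linarith) 5 (by norm_num)
    have hucount : u.Countable := by
      refine Set.PairwiseDisjoint.countable_of_isOpen (s := fun x => ball x (ρ x)) ?_
        (fun _ _ => isOpen_ball) (fun x hx => ⟨x, mem_ball_self (hρ x (hut hx).2).1.1⟩)
      exact hdisj.mono fun x => ball_subset_closedBall
    have := hucount.to_subtype
    have hsub : t ⊆ ⋃ i : u, ball (i : X) (8 * ρ i) := by
      intro x hx
      obtain ⟨b, hb, hsub⟩ := hcov x hx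
      refine mem_iUnion.2 ⟨⟨b, hb⟩, ?_⟩
      have h1 := hsub (mem_closedBall_self (hρ x hx.2).1.1.le)
      have h2 := (hρ b (hut hb).2).1.1
      exact closedBall_subset_ball (by linarith) h1
    have hae : (E ∩ ball x0 N : Set X) ≤ᵐ[μ] (⋃ i : u, ball (i : X) (8 * ρ i) : Set X) := by
      have h1 := (ae_restrict_iff' hEm).1 hdens
      filter_upwards [h1] with x hx hxE
      exact hsub ⟨hxE, hx hxE.1⟩
    have hone : ∀ i : u, ∫⁻ x in ball (i : X) (8 * ρ i), ENNReal.ofReal (|f x| - l) ∂μ ≤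
        A * μ (E ∩ closedBall (i : X) (ρ i)) := by
      rintro ⟨x, hx⟩
      simp only
      obtain ⟨⟨hr, hlt⟩, hbig⟩ := hρ x (hut hx).2
      set r := ρ x
      have h8 : (0:ℝ) < 8 * r := by linarith
      have hns : ¬ (8 * r ∈ S x) := hbig _ (by linarith)
      have hns2 : 2 * C * μ (E ∩ closedBall x (8 * r)) ≤ μ (closedBall x (8 * r)) := by
        by_contra! hcon
        exact hns ⟨h8, hcon⟩
      have hC0 : (C : ℝ≥0∞) ≠ 0 := (zero_lt_one.trans_le hC1).ne'
      have hhalf : 2 * μ (E ∩ ball x (8 * r)) ≤ μ (ball x (8 * r)) := by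
        refine (ENNReal.mul_le_mul_iff_right hC0 coe_ne_top).1 ?_
        calc C * (2 * μ (E ∩ ball x (8 * r))) ≤ C * (2 * μ (E ∩ closedBall x (8 * r))) := by
              gcongr; exact ball_subset_closedBall
          _ = 2 * C * μ (E ∩ closedBall x (8 * r)) := by ring
          _ ≤ μ (closedBall x (8 * r)) := hns2
          _ ≤ μ (ball x (2 * (8 * r))) := measure_mono (closedBall_subset_ball (by linarith))
          _ ≤ _ := hdoub _ _ h8
      have hmain := aux_ball_est μ f hf (ball x (8 * r)) measurableSet_ball (hball x _ h8).1
        (hball x _ h8).2 (hloc x _ h8) K (hBMO x _ h8) l hhalf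
      have hd8 : μ (ball x (8 * r)) ≤ C * (C * C) * μ (closedBall x r) := by
        calc μ (ball x (8 * r)) = μ (ball x (2 * (2 * (2 * r)))) := by ring_nf
          _ ≤ C * (C * (C * μ (ball x r))) := by
            refine (hdoub _ _ (by linarith)).trans ?_
            gcongr
            refine (hdoub _ _ (by linarith)).trans ?_
            gcongr
            exact hdoub _ _ hr
          _ ≤ C * (C * (C * μ (closedBall x r))) := by gcongr; exact ball_subset_closedBall
          _ = _ := by ring
      calc _ ≤ 3 * ENNReal.ofReal K * μ (ball x (8 * r)) := hmain
        _ ≤ 3 * ENNReal.ofReal K * (C * (C * C) * (2 * C * μ (E ∩ closedBall x r))) := by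
          gcongr
          exact hd8.trans (by gcongr)
        _ = _ := by rw [hA]; ring
    calc ∫⁻ x in E ∩ ball x0 N, ENNReal.ofReal (|f x| - l) ∂μ
        ≤ ∫⁻ x in ⋃ i : u, ball (i : X) (8 * ρ i), ENNReal.ofReal (|f x| - l) ∂μ :=
          lintegral_mono' (Measure.restrict_mono' hae le_rfl) le_rfl
      _ ≤ ∑' i : u, ∫⁻ x in ball (i : X) (8 * ρ i), ENNReal.ofReal (|f x| - l) ∂μ :=
          lintegral_iUnion_le _ _
      _ ≤ ∑' i : u, A * μ (E ∩ closedBall (i : X) (ρ i)) := ENNReal.tsum_le_tsum hone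
      _ = A * ∑' i : u, μ (E ∩ closedBall (i : X) (ρ i)) := ENNReal.tsum_mul_left
      _ ≤ A * μ (⋃ i : u, E ∩ closedBall (i : X) (ρ i)) := by
          gcongr
          refine tsum_meas_le_meas_iUnion_of_disjoint μ
            (fun i => hEm.inter isClosed_closedBall.measurableSet) fun i j hij => ?_
          exact (hdisj i.2 j.2 (fun h => hij (Subtype.ext h))).mono inter_subset_right
            inter_subset_right
      _ ≤ A * μ E := by
          gcongr
          exact iUnion_subset fun i => inter_subset_left
  have hU : E = ⋃ N : ℕ, E ∩ ball x0 N := by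
    rw [← inter_iUnion, iUnion_ball_nat, inter_univ]
  have hmono : Monotone fun N : ℕ => E ∩ ball x0 (N : ℝ) := by
    intro i j hij
    exact inter_subset_inter_right _ (ball_subset_ball (by exact_mod_cast hij))
  calc ∫⁻ x in E, ENNReal.ofReal (|f x| - l) ∂μ
      = ∫⁻ x in ⋃ N : ℕ, E ∩ ball x0 N, ENNReal.ofReal (|f x| - l) ∂μ := by rw [← hU]
    _ = ⨆ N : ℕ, ∫⁻ x in E ∩ ball x0 N, ENNReal.ofReal (|f x| - l) ∂μ :=
        setLIntegral_iUnion_of_directed _ hmono.directed_le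
    _ ≤ _ := iSup_le hloc2

lemma aux_part1 {X : Type*} [MetricSpace X] [MeasurableSpace X] [BorelSpace X]
    (μ : Measure X)
    (hball : ∀ (x : X) (r : ℝ), 0 < r → 0 < μ (ball x r) ∧ μ (ball x r) < ⊤)
    (C : ℝ≥0) (hC : 1 ≤ C)
    (hdoub : ∀ (x : X) (r : ℝ), 0 < r → μ (ball x (2 * r)) ≤ (C : ℝ≥0∞) * μ (ball x r))
    (f : X → ℝ) (hf : Measurable f)
    (hloc : ∀ (x : X) (r : ℝ), 0 < r → IntegrableOn f (ball x r) μ)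
    (K : ℝ)
    (hBMO : ∀ (x : X) (r : ℝ), 0 < r →
      (⨍ y in ball x r, |f y - meanOn μ f (ball x r)| ∂μ) ≤ K)
    (α : ℝ) (hα : 0 ≤ α)
    (hdist : ∀ l : ℝ, α < l → distrib μ f l < ⊤) :
    ∃ M : ℝ, 0 ≤ M ∧ ∀ l : ℝ, α < l →
      ∫⁻ x in {x | l < |f x|}, ENNReal.ofReal (|f x| - l) ∂μ ≤
        ENNReal.ofReal M * distrib μ f l := by
  rcases isEmpty_or_nonempty X with hX | ⟨⟨x0⟩⟩
  · refine ⟨0, le_rfl, fun l _ => ?_⟩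
    have : μ = 0 := Subsingleton.elim _ _
    simp [this]
  set A : ℝ≥0∞ := 3 * ENNReal.ofReal K * (C * (C * C)) * (2 * C) with hA
  have hAfin : A ≠ ⊤ := by rw [hA]; finiteness
  suffices h : ∃ D : ℝ≥0∞, D ≠ ⊤ ∧ ∀ l : ℝ, α < l →
      ∫⁻ x in {x | l < |f x|}, ENNReal.ofReal (|f x| - l) ∂μ ≤ D * distrib μ f l by
    obtain ⟨D, hD, h⟩ := h
    refine ⟨D.toReal, ENNReal.toReal_nonneg, ?_⟩
    rwa [ENNReal.ofReal_toReal hD]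
  have hcore := fun l => aux_core μ hball C hC hdoub f hf hloc K hBMO x0 l
  by_cases hfin : μ univ < ⊤
  · obtain ⟨R, hR, hRu⟩ := aux_bounded μ hball C hdoub x0 hfin
    set I : ℝ≥0∞ := ∫⁻ x, ENNReal.ofReal |f x| ∂μ with hI
    have hIfin : I < ⊤ := by
      have h1 := hloc x0 R hR
      rw [hRu, integrableOn_univ] at h1
      have h2 := h1.abs.lintegral_lt_top
      exact h2
    have hpos : μ univ ≠ 0 := ((hball x0 1 one_pos).1.trans_le (measure_mono (subset_univ _))).ne'
    have hdiv : I / μ univ ≠ ⊤ := ENNReal.div_ne_top hIfin.ne hpos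
    refine ⟨A + I / μ univ * (2 * C), by finiteness, fun l hl => ?_⟩
    rw [add_mul]
    by_cases hlarge : 2 * C * μ {x | l < |f x|} < μ univ
    · exact (hcore l hlarge).trans le_self_add
    · push Not at hlarge
      refine le_trans ?_ le_add_self
      calc ∫⁻ x in {x | l < |f x|}, ENNReal.ofReal (|f x| - l) ∂μ
          ≤ ∫⁻ x, ENNReal.ofReal (|f x| - l) ∂μ := setLIntegral_le_lintegral _ _
        _ ≤ I := lintegral_mono fun x => ENNReal.ofReal_le_ofReal (by linarith)
        _ = I / μ univ * μ univ := (ENNReal.div_mul_cancel hpos hfin.ne).symm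
        _ ≤ I / μ univ * (2 * C * μ {x | l < |f x|}) := by gcongr
        _ = _ := by rw [distrib]; ring
  · refine ⟨A, hAfin, fun l hl => hcore l ?_⟩
    rw [not_lt_top_iff.1 hfin]
    have h : μ {x | l < |f x|} < ⊤ := hdist l hl
    exact ENNReal.mul_lt_top (by finiteness) h

lemma aux_rearr_le {X : Type*} [MeasurableSpace X] (μ : Measure X) (f : X → ℝ) (s l : ℝ)
    (hl : 0 ≤ l) (h : distrib μ f l ≤ ENNReal.ofReal s) : rearr μ f s ≤ ENNReal.ofReal l := by
  refine sInf_le ?_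
  simp only [mem_setOf_eq]
  refine le_trans (measure_mono ?_) h
  intro x hx
  exact (ENNReal.ofReal_lt_ofReal_iff_of_nonneg hl).1 hx

lemma aux_distrib_le {X : Type*} [MeasurableSpace X] (μ : Measure X) (f : X → ℝ) (s l : ℝ)
    (hl : 0 ≤ l) (h : rearr μ f s < ENNReal.ofReal l) : distrib μ f l ≤ ENNReal.ofReal s := by
  obtain ⟨a, ha, hal⟩ := sInf_lt_iff.1 h
  refine le_trans (measure_mono ?_) ha
  intro x hx
  exact hal.trans ((ENNReal.ofReal_lt_ofReal_iff_of_nonneg hl).2 hx)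

lemma aux_part2 {X : Type*} [MeasurableSpace X] (μ : Measure X) (f : X → ℝ) (hf : Measurable f)
    (α : ℝ) (hdist : ∀ l : ℝ, α < l → distrib μ f l < ⊤) (t : ℝ) (ht : 0 < t) :
    rearr μ f t ≠ ⊤ := by
  have hm : ∀ n : ℕ, MeasurableSet {x | (n : ℝ) < |f x|} := fun n =>
    measurableSet_lt measurable_const (by fun_prop)
  have hlim : Filter.Tendsto (fun n : ℕ => μ {x | (n : ℝ) < |f x|}) Filter.atTop
      (nhds (μ (⋂ n : ℕ, {x | (n : ℝ) < |f x|}))) := by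
    refine tendsto_measure_iInter_atTop (fun n => (hm n).nullMeasurableSet) ?_ ?_
    · intro i j hij x hx
      have h1 : (j : ℝ) < |f x| := hx
      have h2 : (i : ℝ) ≤ j := by exact_mod_cast hij
      exact h2.trans_lt h1
    · obtain ⟨n, hn⟩ := exists_nat_gt α
      exact ⟨n, (hdist n hn).ne⟩
  have hempty : (⋂ n : ℕ, {x | (n : ℝ) < |f x|}) = ∅ := by
    refine eq_empty_of_forall_notMem fun x hx => ?_
    obtain ⟨n, hn⟩ := exists_nat_gt |f x|
    have := mem_iInter.1 hx n
    exact lt_asymm hn this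
  rw [hempty, measure_empty] at hlim
  obtain ⟨n, hn⟩ := (hlim.eventually (gt_mem_nhds (ENNReal.ofReal_pos.2 ht))).exists
  exact ((aux_rearr_le μ f t n (by positivity) hn.le).trans_lt ENNReal.ofReal_lt_top).ne

lemma aux_layer {X : Type*} [MeasurableSpace X] (μ : Measure X) (f : X → ℝ) (hf : Measurable f)
    (hfin : ∀ t : ℝ, 0 < t → rearr μ f t ≠ ⊤) (t l : ℝ) (hl : 0 ≤ l) :
    ∫⁻ s in Ioc (0 : ℝ) t, (rearr μ f s - ENNReal.ofReal l) ≤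
      ∫⁻ x in {x | l < |f x|}, ENNReal.ofReal (|f x| - l) ∂μ := by
  have hanti : Antitone (rearr μ f) := by
    intro a b hab
    refine sInf_le_sInf fun c hc => ?_
    exact le_trans hc (ENNReal.ofReal_le_ofReal hab)
  have hmeas : Measurable (rearr μ f) := hanti.measurable
  have hEm : MeasurableSet {x | l < |f x|} := measurableSet_lt measurable_const (by fun_prop)
  have hL : ∫⁻ s in Ioc (0 : ℝ) t, (rearr μ f s - ENNReal.ofReal l) =
      ∫⁻ s in Ioc (0 : ℝ) t, ENNReal.ofReal (rearr μ f s - ENNReal.ofReal l).toReal := by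
    refine setLIntegral_congr_fun measurableSet_Ioc fun s hs => ?_
    exact (ENNReal.ofReal_toReal (ENNReal.sub_ne_top (hfin s hs.1))).symm
  rw [hL, lintegral_eq_lintegral_meas_lt _ (ae_of_all _ fun s => ENNReal.toReal_nonneg)
    (by fun_prop), lintegral_eq_lintegral_meas_lt _ ?_ (by fun_prop)]
  · refine setLIntegral_mono' measurableSet_Ioi fun v hv => ?_
    have hv : 0 < v := hv
    have h1 : (μ.restrict {x | l < |f x|}) {x | v < |f x| - l} = distrib μ f (l + v) := by
      rw [Measure.restrict_apply (measurableSet_lt measurable_const (by fun_prop)), distrib]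
      congr 1
      ext x
      simp only [mem_inter_iff, mem_setOf_eq]
      constructor
      · rintro ⟨h, -⟩; linarith
      · intro h; constructor <;> linarith
    rw [h1, Measure.restrict_apply (measurableSet_lt measurable_const (by fun_prop))]
    by_cases htop : distrib μ f (l + v) = ⊤
    · rw [htop]; exact le_top
    calc _ ≤ volume (Ioc (0 : ℝ) (distrib μ f (l + v)).toReal) := by
          refine measure_mono ?_
          rintro s ⟨hs, hs0, -⟩
          refine ⟨hs0, ?_⟩
          by_contra! hcon
          have h2 : distrib μ f (l + v) ≤ ENNReal.ofReal s := by
            rw [← ENNReal.ofReal_toReal htop]; exact ENNReal.ofReal_le_ofReal hcon.le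
          have h3 := aux_rearr_le μ f s (l + v) (by linarith) h2
          have h4 : rearr μ f s - ENNReal.ofReal l ≤ ENNReal.ofReal v := by
            rw [tsub_le_iff_left, ← ENNReal.ofReal_add hl hv.le]; exact h3
          have h5 := ENNReal.toReal_le_of_le_ofReal hv.le h4
          exact absurd hs (not_lt.2 h5)
      _ = _ := by rw [Real.volume_Ioc, sub_zero, ENNReal.ofReal_toReal htop]
  · refine (ae_restrict_iff' hEm).2 (ae_of_all _ fun x hx => ?_)
    have hx : l < |f x| := hx
    simp only [Pi.zero_apply]
    linarith

/-- in a doubling metric measure space, if `f ∈ BMO(X)` and `d_{f,μ}(λ) < ∞`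
for all `λ > α`, then there is `M ≥ 0` with
`∫_{{|f| > λ}} |f| dμ ≤ (λ + M) μ({|f| > λ})` for all `λ > α`; in particular `f` belongs
to weak `L^∞(X)`. -/
theorem stmt15 {X : Type*} [MetricSpace X] [MeasurableSpace X] [BorelSpace X]
    (μ : Measure X)
    (hball : ∀ (x : X) (r : ℝ), 0 < r → 0 < μ (ball x r) ∧ μ (ball x r) < ⊤)
    (C : ℝ≥0) (hC : 1 ≤ C)
    (hdoub : ∀ (x : X) (r : ℝ), 0 < r → μ (ball x (2 * r)) ≤ (C : ℝ≥0∞) * μ (ball x r))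
    (f : X → ℝ) (hf : Measurable f)
    (hloc : ∀ (x : X) (r : ℝ), 0 < r → IntegrableOn f (ball x r) μ)
    (K : ℝ)
    (hBMO : ∀ (x : X) (r : ℝ), 0 < r →
      (⨍ y in ball x r, |f y - meanOn μ f (ball x r)| ∂μ) ≤ K)
    (α : ℝ) (hα : 0 ≤ α)
    (hdist : ∀ l : ℝ, α < l → distrib μ f l < ⊤) :
    (∃ M : ℝ, 0 ≤ M ∧ ∀ l : ℝ, α < l →
      ∫⁻ x in {x | l < |f x|}, ENNReal.ofReal |f x| ∂μ ≤
        ENNReal.ofReal (l + M) * distrib μ f l) ∧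
    (∀ t : ℝ, 0 < t → rearr μ f t ≠ ⊤) ∧
    (∃ M' : ℝ, 0 ≤ M' ∧ ∀ t : ℝ, 0 < t →
      maxfn μ f t - rearr μ f t ≤ ENNReal.ofReal M') := by
  obtain ⟨M, hM, h1⟩ := aux_part1 μ hball C hC hdoub f hf hloc K hBMO α hα hdist
  have h2 := aux_part2 μ f hf α hdist
  refine ⟨⟨M, hM, fun l hl => ?_⟩, h2, α + 1 + M, by linarith, fun t ht => ?_⟩
  · calc ∫⁻ x in {x | l < |f x|}, ENNReal.ofReal |f x| ∂μ
        ≤ ∫⁻ x in {x | l < |f x|}, (ENNReal.ofReal l + ENNReal.ofReal (|f x| - l)) ∂μ := by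
          refine lintegral_mono fun x => ?_
          refine le_trans (ENNReal.ofReal_le_ofReal ?_) ENNReal.ofReal_add_le
          linarith
      _ = ENNReal.ofReal l * distrib μ f l +
          ∫⁻ x in {x | l < |f x|}, ENNReal.ofReal (|f x| - l) ∂μ := by
          rw [lintegral_add_left measurable_const, setLIntegral_const, distrib]
      _ ≤ ENNReal.ofReal l * distrib μ f l + ENNReal.ofReal M * distrib μ f l := by
          gcongr; exact h1 l hl
      _ = _ := by rw [ENNReal.ofReal_add (by linarith) hM, add_mul]
  · set q := (rearr μ f t).toReal with hq
    have hq0 : 0 ≤ q := ENNReal.toReal_nonneg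
    have hqe : rearr μ f t = ENNReal.ofReal q := (ENNReal.ofReal_toReal (h2 t ht)).symm
    set l : ℝ := q + α + 1 with hl
    have hl0 : 0 ≤ l := by linarith
    have hd : distrib μ f l ≤ ENNReal.ofReal t := by
      refine aux_distrib_le μ f t l hl0 ?_
      rw [hqe]
      exact (ENNReal.ofReal_lt_ofReal_iff (by linarith)).2 (by linarith)
    have hint : ∫⁻ s in Ioc (0 : ℝ) t, rearr μ f s ≤ ENNReal.ofReal (l + M) * ENNReal.ofReal t := by
      calc ∫⁻ s in Ioc (0 : ℝ) t, rearr μ f s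
          ≤ ∫⁻ s in Ioc (0 : ℝ) t, (ENNReal.ofReal l + (rearr μ f s - ENNReal.ofReal l)) :=
            lintegral_mono fun s => le_add_tsub
        _ = ENNReal.ofReal l * ENNReal.ofReal t +
            ∫⁻ s in Ioc (0 : ℝ) t, (rearr μ f s - ENNReal.ofReal l) := by
            rw [lintegral_add_left measurable_const, setLIntegral_const, Real.volume_Ioc, sub_zero]
        _ ≤ ENNReal.ofReal l * ENNReal.ofReal t + ENNReal.ofReal M * ENNReal.ofReal t := by
            gcongr
            refine (aux_layer μ f hf h2 t l hl0).trans ((h1 l (by linarith)).trans ?_)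
            gcongr
        _ = _ := by rw [ENNReal.ofReal_add hl0 hM, add_mul]
    rw [tsub_le_iff_right, hqe, ← ENNReal.ofReal_add (by linarith) hq0]
    refine ENNReal.div_le_of_le_mul (hint.trans_eq ?_)
    congr 2
    rw [hl]; ring
end
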